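/- arXiv:2402.15503 — 2 statements merged into one kernel-verified Lean document; each statement's English description precedes it below -/
import Mathlib

section
/- Let Ω ⊆ ℂ be a nonempty open connected set, z₀ a frontier point of Ω, and u : ℂ → ℂ holomorphic (complex-differentiable) on Ω and nonconstant on Ω. Let W be an open neighborhood of z₀ and ũ : ℂ → ℂ a function that is C^∞ on W (as a function of two real variables), agrees with u on W ∩ Ω, and satisfies ũ(z₀) = 0. If ũ vanishes to finite order at z₀ in the L² sense, then there exists an open neighborhood U of z₀ with U ⊆ W such that ∫_U |∂̄ũ(z)|²/|ũ(z)|² dv < ∞ while the lower Lebesgue integral ∫_U |∂ũ(z)|²/|ũ(z)|² dv is infinite. -/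
/-!
Since `Ω` is open, `∂̄ũ` and all its derivatives vanish on `Ω` near `z₀`, hence by continuity also
at `z₀ ∈ closure Ω`, so `∂̄ũ = o(|z - z₀|^n)` for every `n`. As `∂` preserves both smoothness and
holomorphy on `Ω`, the same holds for `∂ᵏũ` in place of `ũ`, and integrating
`d(∂ᵏũ) = ∂ᵏ⁺¹ũ dz + ∂̄∂ᵏũ dz̄` repeatedly gives a Taylor expansion of `ũ` in powers of `z - z₀`
alone, with coefficients `∂ᵏũ(z₀) / k!`.

If all these coefficients were zero, `ũ` would vanish to infinite order. Otherwise let `n + 1` be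
the index of the first nonzero one. Then `|ũ| ≍ |z - z₀|^(n+1)` and `|∂ũ| ≍ |z - z₀|^n`, so `∂̄ũ/ũ`
is bounded near `z₀`, whereas `|∂ũ/ũ|² ≍ |z - z₀|⁻²` is not integrable in the plane.
-/

open MeasureTheory

/-- The Wirtinger derivative `∂u(z) = (D(1) − i·D(i))/2`, where `D = fderiv ℝ u z`. -/
noncomputable def wirtingerD (f : ℂ → ℂ) (z : ℂ) : ℂ :=
  (fderiv ℝ f z 1 - Complex.I * fderiv ℝ f z Complex.I) / 2

/-- The Wirtinger derivative `∂̄u(z) = (D(1) + i·D(i))/2`, where `D = fderiv ℝ u z`. -/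
noncomputable def wirtingerDBar (f : ℂ → ℂ) (z : ℂ) : ℂ :=
  (fderiv ℝ f z 1 + Complex.I * fderiv ℝ f z Complex.I) / 2

/-- `f` vanishes to infinite order at `z₀` in the `L²` sense:
`r^{-m} ∫_{B(z₀,r)} |f|² → 0` as `r → 0⁺` for every `m ≥ 0`. -/
def VanishesInfiniteOrder (f : ℂ → ℂ) (z₀ : ℂ) : Prop :=
  ∀ m : ℝ, 0 ≤ m →
    Filter.Tendsto (fun r : ℝ => r ^ (-m) * ∫ z in Metric.ball z₀ r, ‖f z‖ ^ 2)
      (nhdsWithin 0 (Set.Ioi 0)) (nhds 0)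

open Asymptotics Filter Metric Module Set Topology
open scoped ContDiff Nat

universe u

section Flatness

variable {E F : Type*} [NormedAddCommGroup E] [NormedSpace ℝ E] [NormedAddCommGroup F]
  [NormedSpace ℝ F]

theorem sub_isLittleO_pow_succ_of_fderiv {f : E → F} {x₀ : E} {n : ℕ}
    (hf : ∀ᶠ x in 𝓝 x₀, DifferentiableAt ℝ f x)
    (hd : fderiv ℝ f =o[𝓝 x₀] fun x ↦ ‖x - x₀‖ ^ n) :
    (fun x ↦ f x - f x₀) =o[𝓝 x₀] fun x ↦ ‖x - x₀‖ ^ (n + 1) := by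
  obtain ⟨ε, hε, hball⟩ := eventually_nhds_iff_ball.1 hf
  have hnhds : 𝓝[ball x₀ ε] x₀ = 𝓝 x₀ := isOpen_ball.nhdsWithin_eq (mem_ball_self hε)
  rw [← hnhds] at hd ⊢
  exact (convex_ball x₀ ε).isLittleO_pow_succ (mem_ball_self hε)
    (fun x hx ↦ (hball x hx).hasFDerivAt.hasFDerivWithinAt) hd

theorem eventually_differentiableAt_of_contDiffAt_succ {f : E → F} {x₀ : E} {n : ℕ}
    (hf : ContDiffAt ℝ (n + 1) f x₀) : ∀ᶠ x in 𝓝 x₀, DifferentiableAt ℝ f x :=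
  ((hf.of_le le_add_self).eventually (by simp)).mono fun _ hx ↦ hx.differentiableAt one_ne_zero

theorem eq_of_eventually_eq_nhdsWithin {X Y : Type*} [TopologicalSpace X] [TopologicalSpace Y]
    [T2Space Y] {Ω : Set X} {x₀ : X} {g : X → Y} {c : Y} (hx₀ : x₀ ∈ closure Ω)
    (hg : ContinuousAt g x₀) (h : ∀ᶠ x in 𝓝[Ω] x₀, g x = c) : g x₀ = c := by
  have : (𝓝[Ω] x₀).NeBot := mem_closure_iff_nhdsWithin_neBot.1 hx₀
  exact tendsto_nhds_unique (hg.tendsto.mono_left nhdsWithin_le_nhds)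
    (tendsto_const_nhds.congr' (EventuallyEq.symm h))

-- `E` and `F` share a universe because the induction replaces `F` by `E →L[ℝ] F`.
theorem isLittleO_pow_of_eventually_eq_zero {E F : Type u} [NormedAddCommGroup E]
    [NormedSpace ℝ E] [NormedAddCommGroup F] [NormedSpace ℝ F] {Ω : Set E} (hΩ : IsOpen Ω) {x₀ : E}
    (hx₀ : x₀ ∈ closure Ω) {n : ℕ} {g : E → F} (hg : ContDiffAt ℝ n g x₀)
    (h : ∀ᶠ x in 𝓝[Ω] x₀, g x = 0) : g =o[𝓝 x₀] fun x ↦ ‖x - x₀‖ ^ n := by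
  have hgx₀ : g x₀ = 0 := eq_of_eventually_eq_nhdsWithin hx₀ hg.continuousAt h
  induction n generalizing F with
  | zero => simpa [isLittleO_one_iff, hgx₀] using hg.continuousAt.tendsto
  | succ n ih =>
    push_cast at hg
    have hg' : ContDiffAt ℝ n (fderiv ℝ g) x₀ := hg.fderiv_right le_rfl
    have h' : ∀ᶠ x in 𝓝[Ω] x₀, fderiv ℝ g x = 0 := by
      filter_upwards [(eventually_nhdsWithin_eventually_nhds_iff_of_isOpen hΩ).2 h] with x hx
      rw [EventuallyEq.fderiv_eq (f := fun _ ↦ 0) hx, fderiv_fun_const, Pi.zero_apply]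
    have hg'x₀ : fderiv ℝ g x₀ = 0 := eq_of_eventually_eq_nhdsWithin hx₀ hg'.continuousAt h'
    simpa [hgx₀] using sub_isLittleO_pow_succ_of_fderiv
      (eventually_differentiableAt_of_contDiffAt_succ hg) (ih hg' h' hg'x₀)

end Flatness

section Wirtinger

variable {f g : ℂ → ℂ} {z z₀ : ℂ}

theorem fderiv_apply_eq_wirtinger (f : ℂ → ℂ) (z v : ℂ) :
    fderiv ℝ f z v = wirtingerD f z * v + wirtingerDBar f z * starRingEnd ℂ v := by
  have hv : fderiv ℝ f z v = v.re * fderiv ℝ f z 1 + v.im * fderiv ℝ f z Complex.I := by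
    have hbasis : v = v.re • (1 : ℂ) + v.im • Complex.I := by simp [Complex.re_add_im]
    conv_lhs => rw [hbasis, map_add, map_smul, map_smul, Complex.real_smul, Complex.real_smul]
  have hconj : starRingEnd ℂ v = v.re - v.im * Complex.I := RCLike.conj_eq_re_sub_im v
  rw [hv, hconj, wirtingerD, wirtingerDBar]
  linear_combination (-(fderiv ℝ f z 1 - Complex.I * fderiv ℝ f z Complex.I) / 2) *
    (Complex.re_add_im v).symm + (v.im * fderiv ℝ f z Complex.I) * Complex.I_sq

theorem norm_fderiv_le_wirtinger (f : ℂ → ℂ) (z : ℂ) :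
    ‖fderiv ℝ f z‖ ≤ ‖wirtingerD f z‖ + ‖wirtingerDBar f z‖ := by
  refine ContinuousLinearMap.opNorm_le_bound _ (by positivity) fun v ↦ ?_
  calc ‖fderiv ℝ f z v‖ = ‖wirtingerD f z * v + wirtingerDBar f z * starRingEnd ℂ v‖ := by
        rw [fderiv_apply_eq_wirtinger]
    _ ≤ ‖wirtingerD f z * v‖ + ‖wirtingerDBar f z * starRingEnd ℂ v‖ := norm_add_le _ _
    _ = (‖wirtingerD f z‖ + ‖wirtingerDBar f z‖) * ‖v‖ := by
        rw [norm_mul, norm_mul, RCLike.norm_conj, add_mul]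

theorem wirtingerD_sub (hf : DifferentiableAt ℝ f z) (hg : DifferentiableAt ℝ g z) :
    wirtingerD (fun w ↦ f w - g w) z = wirtingerD f z - wirtingerD g z := by
  simp only [wirtingerD, fderiv_fun_sub hf hg, sub_apply]
  ring

theorem wirtingerDBar_sub (hf : DifferentiableAt ℝ f z) (hg : DifferentiableAt ℝ g z) :
    wirtingerDBar (fun w ↦ f w - g w) z = wirtingerDBar f z - wirtingerDBar g z := by
  simp only [wirtingerDBar, fderiv_fun_sub hf hg, sub_apply]
  ring

theorem wirtingerD_eq_deriv (hf : DifferentiableAt ℂ f z) : wirtingerD f z = deriv f z := by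
  have hderiv : fderiv ℝ f z 1 = deriv f z := by
    rw [hf.fderiv_restrictScalars ℝ]
    rfl
  rw [wirtingerD, (differentiableAt_complex_iff_differentiableAt_real.1 hf).2, hderiv, smul_eq_mul]
  linear_combination (-deriv f z / 2) * Complex.I_sq

theorem wirtingerDBar_eq_zero (hf : DifferentiableAt ℂ f z) : wirtingerDBar f z = 0 := by
  rw [wirtingerDBar, (differentiableAt_complex_iff_differentiableAt_real.1 hf).2, smul_eq_mul]
  linear_combination (fderiv ℝ f z 1 / 2) * Complex.I_sq

theorem contDiffAt_wirtingerD {m n : WithTop ℕ∞} (hf : ContDiffAt ℝ n f z) (hmn : m + 1 ≤ n) :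
    ContDiffAt ℝ m (wirtingerD f) z := by
  have h : ContDiffAt ℝ m (fderiv ℝ f) z := hf.fderiv_right hmn
  exact ((h.clm_apply contDiffAt_const).sub
    (contDiffAt_const.mul (h.clm_apply contDiffAt_const))).div_const 2

theorem contDiffAt_wirtingerDBar {m n : WithTop ℕ∞} (hf : ContDiffAt ℝ n f z) (hmn : m + 1 ≤ n) :
    ContDiffAt ℝ m (wirtingerDBar f) z := by
  have h : ContDiffAt ℝ m (fderiv ℝ f) z := hf.fderiv_right hmn
  exact ((h.clm_apply contDiffAt_const).add
    (contDiffAt_const.mul (h.clm_apply contDiffAt_const))).div_const 2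

theorem sub_isLittleO_pow_succ_of_wirtinger {n : ℕ}
    (hf : ∀ᶠ z in 𝓝 z₀, DifferentiableAt ℝ f z)
    (hD : wirtingerD f =o[𝓝 z₀] fun z ↦ ‖z - z₀‖ ^ n)
    (hDBar : wirtingerDBar f =o[𝓝 z₀] fun z ↦ ‖z - z₀‖ ^ n) :
    (fun z ↦ f z - f z₀) =o[𝓝 z₀] fun z ↦ ‖z - z₀‖ ^ (n + 1) := by
  refine sub_isLittleO_pow_succ_of_fderiv hf <|
    IsBigO.trans_isLittleO ?_ (hD.norm_left.add hDBar.norm_left)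
  exact .of_norm_le fun z ↦ norm_fderiv_le_wirtinger f z

end Wirtinger

/-- The holomorphic part of the Taylor polynomial of order `n` of `f` at `z₀`: the terms without a
power of the conjugate of `z - z₀`. -/
noncomputable def wirtingerTaylor (f : ℂ → ℂ) (z₀ : ℂ) (n : ℕ) (z : ℂ) : ℂ :=
  ∑ k ∈ Finset.range (n + 1), wirtingerD^[k] f z₀ / k ! * (z - z₀) ^ k

theorem wirtingerTaylor_self (f : ℂ → ℂ) (z₀ : ℂ) (n : ℕ) : wirtingerTaylor f z₀ n z₀ = f z₀ := by
  simp [wirtingerTaylor, Finset.sum_range_succ']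

theorem hasDerivAt_wirtingerTaylor_succ (f : ℂ → ℂ) (z₀ : ℂ) (n : ℕ) (z : ℂ) :
    HasDerivAt (wirtingerTaylor f z₀ (n + 1)) (wirtingerTaylor (wirtingerD f) z₀ n z) z := by
  have hterm (k : ℕ) : HasDerivAt (fun w ↦ wirtingerD^[k + 1] f z₀ / (k + 1)! * (w - z₀) ^ (k + 1))
      (wirtingerD^[k] (wirtingerD f) z₀ / k ! * (z - z₀) ^ k) z := by
    refine ((((hasDerivAt_id z).sub_const z₀).pow (k + 1)).const_mul _).congr_deriv ?_
    have : (k ! : ℂ) ≠ 0 := mod_cast k.factorial_ne_zero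
    have : (k : ℂ) + 1 ≠ 0 := k.cast_add_one_ne_zero
    rw [Function.iterate_succ_apply, Nat.factorial_succ]
    simp only [id_eq, add_tsub_cancel_right]
    push_cast
    field_simp
  have hsum := (HasDerivAt.fun_sum fun k (_ : k ∈ Finset.range (n + 1)) ↦ hterm k).add_const
    (wirtingerD^[0] f z₀ / 0 ! * (z - z₀) ^ 0)
  refine hsum.congr_of_eventuallyEq (.of_forall fun w ↦ ?_)
  simp [wirtingerTaylor, Finset.sum_range_succ' _ (n + 1)]

section OneSidedHolomorphic

variable {Ω : Set ℂ} {z₀ : ℂ} {f : ℂ → ℂ}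

theorem wirtingerDBar_isLittleO_pow (hΩ : IsOpen Ω) (hz₀ : z₀ ∈ closure Ω) {n : ℕ}
    (hf : ContDiffAt ℝ (n + 1) f z₀) (hol : ∀ᶠ z in 𝓝[Ω] z₀, DifferentiableAt ℂ f z) :
    wirtingerDBar f =o[𝓝 z₀] fun z ↦ ‖z - z₀‖ ^ n :=
  isLittleO_pow_of_eventually_eq_zero hΩ hz₀ (contDiffAt_wirtingerDBar hf le_rfl)
    (hol.mono fun _ ↦ wirtingerDBar_eq_zero)

theorem eventually_differentiableAt_wirtingerD (hΩ : IsOpen Ω)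
    (hol : ∀ᶠ z in 𝓝[Ω] z₀, DifferentiableAt ℂ f z) :
    ∀ᶠ z in 𝓝[Ω] z₀, DifferentiableAt ℂ (wirtingerD f) z := by
  filter_upwards [(eventually_nhdsWithin_eventually_nhds_iff_of_isOpen hΩ).2 hol] with z hz
  have hD : wirtingerD f =ᶠ[𝓝 z] deriv f := hz.mono fun _ ↦ wirtingerD_eq_deriv
  have han : AnalyticAt ℂ f z := Complex.analyticAt_iff_eventually_differentiableAt.2 hz
  exact han.deriv.differentiableAt.congr_of_eventuallyEq hD

theorem sub_wirtingerTaylor_isLittleO (hΩ : IsOpen Ω) (hz₀ : z₀ ∈ closure Ω) {n : ℕ}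
    (hf : ContDiffAt ℝ n f z₀) (hol : ∀ᶠ z in 𝓝[Ω] z₀, DifferentiableAt ℂ f z) :
    (fun z ↦ f z - wirtingerTaylor f z₀ n z) =o[𝓝 z₀] fun z ↦ ‖z - z₀‖ ^ n := by
  induction n generalizing f with
  | zero =>
    simpa [wirtingerTaylor, isLittleO_one_iff, tendsto_sub_nhds_zero_iff]
      using hf.continuousAt.tendsto
  | succ n ih =>
    push_cast at hf
    have hdiff := eventually_differentiableAt_of_contDiffAt_succ hf
    have hT (z : ℂ) := hasDerivAt_wirtingerTaylor_succ f z₀ n z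
    have hTdiff (z : ℂ) : DifferentiableAt ℝ (wirtingerTaylor f z₀ (n + 1)) z :=
      (hT z).differentiableAt.restrictScalars ℝ
    have hD : wirtingerD (fun z ↦ f z - wirtingerTaylor f z₀ (n + 1) z) =o[𝓝 z₀]
        fun z ↦ ‖z - z₀‖ ^ n := by
      refine (ih (contDiffAt_wirtingerD hf le_rfl)
        (eventually_differentiableAt_wirtingerD hΩ hol)).congr' ?_ .rfl
      filter_upwards [hdiff] with z hz
      rw [wirtingerD_sub hz (hTdiff z), wirtingerD_eq_deriv (hT z).differentiableAt, (hT z).deriv]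
    have hDBar : wirtingerDBar (fun z ↦ f z - wirtingerTaylor f z₀ (n + 1) z) =o[𝓝 z₀]
        fun z ↦ ‖z - z₀‖ ^ n := by
      refine (wirtingerDBar_isLittleO_pow hΩ hz₀ hf hol).congr' ?_ .rfl
      filter_upwards [hdiff] with z hz
      rw [wirtingerDBar_sub hz (hTdiff z), wirtingerDBar_eq_zero (hT z).differentiableAt, sub_zero]
    simpa [wirtingerTaylor_self] using sub_isLittleO_pow_succ_of_wirtinger
      (hdiff.mono fun z hz ↦ hz.sub (hTdiff z)) hD hDBar

theorem isLittleO_pow_of_iterate_wirtingerD_eq_zero (hΩ : IsOpen Ω) (hz₀ : z₀ ∈ closure Ω) {n : ℕ}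
    (hf : ContDiffAt ℝ n f z₀) (hol : ∀ᶠ z in 𝓝[Ω] z₀, DifferentiableAt ℂ f z)
    (hzero : ∀ k ≤ n, wirtingerD^[k] f z₀ = 0) : f =o[𝓝 z₀] fun z ↦ ‖z - z₀‖ ^ n := by
  refine (sub_wirtingerTaylor_isLittleO hΩ hz₀ hf hol).congr_left fun z ↦ ?_
  rw [wirtingerTaylor, Finset.sum_eq_zero, sub_zero]
  intro k hk
  rw [hzero k (Finset.mem_range_succ_iff.1 hk), zero_div, zero_mul]

theorem isTheta_pow_of_iterate_wirtingerD_ne_zero (hΩ : IsOpen Ω) (hz₀ : z₀ ∈ closure Ω) {n : ℕ}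
    (hf : ContDiffAt ℝ n f z₀) (hol : ∀ᶠ z in 𝓝[Ω] z₀, DifferentiableAt ℂ f z)
    (hzero : ∀ k < n, wirtingerD^[k] f z₀ = 0) (hne : wirtingerD^[n] f z₀ ≠ 0) :
    f =Θ[𝓝 z₀] fun z ↦ (z - z₀) ^ n := by
  have hTaylor (z : ℂ) : wirtingerTaylor f z₀ n z = wirtingerD^[n] f z₀ / n ! * (z - z₀) ^ n := by
    rw [wirtingerTaylor, Finset.sum_range_succ, Finset.sum_eq_zero, zero_add]
    intro k hk
    rw [hzero k (Finset.mem_range.1 hk), zero_div, zero_mul]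
  have hcoeff : wirtingerD^[n] f z₀ / n ! ≠ 0 :=
    div_ne_zero hne (mod_cast n.factorial_ne_zero)
  have hremainder : (fun z ↦ f z - wirtingerD^[n] f z₀ / n ! * (z - z₀) ^ n) =o[𝓝 z₀]
      fun z ↦ (z - z₀) ^ n := by
    simpa only [hTaylor, ← norm_pow, isLittleO_norm_right]
      using sub_wirtingerTaylor_isLittleO hΩ hz₀ hf hol
  have hequiv : f ~[𝓝 z₀] fun z ↦ wirtingerD^[n] f z₀ / n ! * (z - z₀) ^ n :=
    (isLittleO_const_mul_right_iff hcoeff).2 hremainder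
  exact hequiv.isTheta.trans ((isTheta_const_mul_left hcoeff).2 isTheta_rfl)

end OneSidedHolomorphic

section Integrals

theorem exists_mem_setLIntegral_enorm_lt_top_of_isBigO {α E F : Type*} [MeasurableSpace α]
    [SeminormedAddCommGroup E] [SeminormedAddCommGroup F] {μ : Measure α} {l : Filter α}
    [l.IsMeasurablyGenerated] {f : α → E} {g : α → F} (hfg : f =O[l] g)
    (hg : ∃ s ∈ l, ∫⁻ x in s, ‖g x‖ₑ ∂μ < ⊤) : ∃ s ∈ l, ∫⁻ x in s, ‖f x‖ₑ ∂μ < ⊤ := by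
  obtain ⟨s, hs, hgs⟩ := hg
  obtain ⟨C, hC⟩ := hfg.isBigOWith
  obtain ⟨t, ht, htm, hts⟩ := ((eventually_mem_set.2 hs).and hC.bound).exists_measurable_mem
  refine ⟨t, ht, ?_⟩
  calc ∫⁻ x in t, ‖f x‖ₑ ∂μ
    _ ≤ ∫⁻ x in t, ENNReal.ofReal C * ‖g x‖ₑ ∂μ := by
        refine setLIntegral_mono' htm fun x hx ↦ ?_
        rw [← ofReal_norm, ← ofReal_norm, ← ENNReal.ofReal_mul' (norm_nonneg _)]
        exact ENNReal.ofReal_le_ofReal (hts x hx).2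
    _ = ENNReal.ofReal C * ∫⁻ x in t, ‖g x‖ₑ ∂μ := lintegral_const_mul' _ _ ENNReal.ofReal_ne_top
    _ ≤ ENNReal.ofReal C * ∫⁻ x in s, ‖g x‖ₑ ∂μ := by
        gcongr
        exact fun x hx ↦ (hts x hx).1
    _ < ⊤ := ENNReal.mul_lt_top ENNReal.ofReal_lt_top hgs

variable {E F : Type*} [NormedAddCommGroup E] [NormedSpace ℝ E] [FiniteDimensional ℝ E]
  [MeasurableSpace E] [BorelSpace E] (μ : Measure E) [μ.IsAddHaarMeasure]

theorem not_integrableOn_inv_norm_sub_pow_finrank [Nontrivial E] {x₀ : E} {s : Set E}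
    (hs : s ∈ 𝓝 x₀) :
    ¬ IntegrableOn (fun x ↦ (‖x - x₀‖ ^ finrank ℝ E)⁻¹) s μ := by
  intro h
  obtain ⟨r, hr, hrs⟩ := Metric.mem_nhds_iff.1 hs
  have hcentered : IntegrableOn (fun x : E ↦ (‖x‖ ^ finrank ℝ E)⁻¹) (ball 0 r) μ := by
    rw [← (measurePreserving_sub_right μ x₀).integrableOn_comp_preimage
      (measurableEmbedding_subRight x₀)]
    convert! h.mono_set hrs using 1
    ext x
    simp [dist_eq_norm]
  -- In polar coordinates the integral is a multiple of `∫₀ʳ dt / t`.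
  rw [integrableOn_fun_norm_addHaar μ (f := fun t : ℝ ↦ (t ^ finrank ℝ E)⁻¹)] at hcentered
  have hinv : IntegrableOn (fun t : ℝ ↦ t⁻¹) (Ioo 0 r) := by
    refine hcentered.congr_fun (fun t ht ↦ ?_) measurableSet_Ioo
    obtain ⟨d, hd⟩ := Nat.exists_eq_add_one.2 (finrank_pos (R := ℝ) (M := E))
    simp only [hd, add_tsub_cancel_right, smul_eq_mul]
    rw [← div_eq_mul_inv, pow_succ, div_mul_cancel_left₀ (pow_ne_zero d ht.1.ne')]
  rw [← intervalIntegrable_iff_integrableOn_Ioo_of_le hr.le, intervalIntegrable_inv_iff] at hinv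
  simp [hr.ne, hr.le] at hinv

theorem setLIntegral_enorm_eq_top_of_inv_norm_pow_isBigO [Nontrivial E] [NormedAddCommGroup F]
    {f : E → F} {x₀ : E} {s : Set E}
    (hf : (fun x ↦ (‖x - x₀‖ ^ finrank ℝ E)⁻¹) =O[𝓝 x₀] f) (hs : s ∈ 𝓝 x₀) :
    ∫⁻ x in s, ‖f x‖ₑ ∂μ = ⊤ := by
  by_contra hne
  obtain ⟨t, ht, hfin⟩ := exists_mem_setLIntegral_enorm_lt_top_of_isBigO hf
    ⟨s, hs, lt_top_iff_ne_top.2 hne⟩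
  refine not_integrableOn_inv_norm_sub_pow_finrank μ ht ⟨?_, hfin⟩
  exact Measurable.aestronglyMeasurable (by fun_prop)

theorem setIntegral_ball_isBigO [NormedAddCommGroup F] [NormedSpace ℝ F] {f : E → F} {x₀ : E}
    {k : ℕ} (hf : f =O[𝓝 x₀] fun x ↦ ‖x - x₀‖ ^ k) :
    (fun r ↦ ∫ x in ball x₀ r, f x ∂μ) =O[𝓝[>] 0] fun r : ℝ ↦ r ^ (k + finrank ℝ E) := by
  obtain ⟨C, hC0, hC⟩ := hf.exists_nonneg
  obtain ⟨ε, hε, hball⟩ := eventually_nhds_iff_ball.1 hC.bound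
  refine .of_bound (C * μ.real (ball 0 1)) ?_
  filter_upwards [Ioo_mem_nhdsGT hε] with r ⟨hr0, hrε⟩
  have hbound : ∀ x ∈ ball x₀ r, ‖f x‖ ≤ C * r ^ k := fun x hx ↦ by
    have hxr : ‖x - x₀‖ ≤ r := (mem_ball_iff_norm.1 hx).le
    calc ‖f x‖ ≤ C * ‖‖x - x₀‖ ^ k‖ := hball x (ball_subset_ball hrε.le hx)
      _ = C * ‖x - x₀‖ ^ k := by rw [norm_pow, norm_norm]
      _ ≤ C * r ^ k := by gcongr
  calc ‖∫ x in ball x₀ r, f x ∂μ‖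
    _ ≤ C * r ^ k * μ.real (ball x₀ r) :=
        norm_setIntegral_le_of_norm_le_const measure_ball_lt_top hbound
    _ = C * μ.real (ball 0 1) * ‖r ^ (k + finrank ℝ E)‖ := by
        rw [measureReal_def, Measure.addHaar_ball_of_pos μ x₀ hr0, ENNReal.toReal_mul,
          ENNReal.toReal_ofReal (by positivity), norm_pow, Real.norm_of_nonneg hr0.le,
          measureReal_def]
        ring

theorem vanishesInfiniteOrder_of_isBigO {f : ℂ → ℂ} {z₀ : ℂ}
    (hf : ∀ n : ℕ, f =O[𝓝 z₀] fun z ↦ ‖z - z₀‖ ^ n) : VanishesInfiniteOrder f z₀ := by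
  intro m _
  obtain ⟨n, hn⟩ := exists_nat_gt m
  have hsq : (fun z ↦ ‖f z‖ ^ 2) =O[𝓝 z₀] fun z ↦ ‖z - z₀‖ ^ (n * 2) := by
    simpa only [← pow_mul] using (hf n).norm_left.pow 2
  have hexp : 0 < -m + (n * 2 + 2 : ℕ) := by
    push_cast
    linarith [n.cast_nonneg (α := ℝ)]
  have hprod : (fun r : ℝ ↦ r ^ (-m) * ∫ z in ball z₀ r, ‖f z‖ ^ 2) =O[𝓝[>] 0]
      fun r ↦ r ^ (-m + (n * 2 + 2 : ℕ)) := by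
    refine ((isBigO_refl _ _).mul (setIntegral_ball_isBigO volume hsq)).congr' .rfl ?_
    filter_upwards [self_mem_nhdsWithin] with r hr
    rw [Complex.finrank_real_complex, Real.rpow_add hr, Real.rpow_natCast]
  refine hprod.trans_tendsto ?_
  simpa only [Real.zero_rpow hexp.ne'] using
    (Real.continuousAt_rpow_const 0 _ (.inr hexp.le)).tendsto.mono_left nhdsWithin_le_nhds

end Integrals

section LogarithmicDerivative

variable {Ω : Set ℂ} {z₀ : ℂ} {f : ℂ → ℂ}

theorem exists_iterate_wirtingerD_ne_zero (hΩ : IsOpen Ω) (hz₀ : z₀ ∈ closure Ω)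
    (hf : ContDiffAt ℝ ∞ f z₀) (hol : ∀ᶠ z in 𝓝[Ω] z₀, DifferentiableAt ℂ f z)
    (hfin : ¬ VanishesInfiniteOrder f z₀) : ∃ n, wirtingerD^[n] f z₀ ≠ 0 := by
  by_contra! hzero
  exact hfin <| vanishesInfiniteOrder_of_isBigO fun n ↦
    (isLittleO_pow_of_iterate_wirtingerD_eq_zero hΩ hz₀ (hf.of_le (mod_cast le_top)) hol
      fun k _ ↦ hzero k).isBigO

theorem exists_isTheta_pow_succ_and_wirtingerD_isTheta_pow (hΩ : IsOpen Ω) (hz₀ : z₀ ∈ closure Ω)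
    (hf : ContDiffAt ℝ ∞ f z₀) (hol : ∀ᶠ z in 𝓝[Ω] z₀, DifferentiableAt ℂ f z) (hfz₀ : f z₀ = 0)
    (hfin : ¬ VanishesInfiniteOrder f z₀) :
    ∃ n : ℕ, (f =Θ[𝓝 z₀] fun z ↦ (z - z₀) ^ (n + 1)) ∧
      wirtingerD f =Θ[𝓝 z₀] fun z ↦ (z - z₀) ^ n := by
  classical
  have hex := exists_iterate_wirtingerD_ne_zero hΩ hz₀ hf hol hfin
  obtain ⟨n, hn⟩ : ∃ n, Nat.find hex = n + 1 :=
    Nat.exists_eq_add_one.2 ((Nat.find_pos hex).2 (not_not.2 hfz₀))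
  have hne : wirtingerD^[n + 1] f z₀ ≠ 0 := hn ▸ Nat.find_spec hex
  have hzero : ∀ k < n + 1, wirtingerD^[k] f z₀ = 0 := fun k hk ↦
    not_not.1 (Nat.find_min hex (hn ▸ hk))
  exact ⟨n, isTheta_pow_of_iterate_wirtingerD_ne_zero hΩ hz₀ (hf.of_le (mod_cast le_top)) hol
      hzero hne,
    isTheta_pow_of_iterate_wirtingerD_ne_zero hΩ hz₀
      (contDiffAt_wirtingerD hf (mod_cast le_top)) (eventually_differentiableAt_wirtingerD hΩ hol)
      (fun k hk ↦ hzero (k + 1) (by lia)) hne⟩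

theorem wirtingerD_div_self_isTheta_inv (hΩ : IsOpen Ω) (hz₀ : z₀ ∈ closure Ω)
    (hf : ContDiffAt ℝ ∞ f z₀) (hol : ∀ᶠ z in 𝓝[Ω] z₀, DifferentiableAt ℂ f z) (hfz₀ : f z₀ = 0)
    (hfin : ¬ VanishesInfiniteOrder f z₀) :
    (fun z ↦ wirtingerD f z / f z) =Θ[𝓝 z₀] fun z ↦ (z - z₀)⁻¹ := by
  obtain ⟨n, hfn, hDn⟩ :=
    exists_isTheta_pow_succ_and_wirtingerD_isTheta_pow hΩ hz₀ hf hol hfz₀ hfin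
  have hpow (z : ℂ) : (z - z₀) ^ n / (z - z₀) ^ (n + 1) = (z - z₀)⁻¹ := by
    rcases eq_or_ne z z₀ with rfl | hz
    · simp
    · rw [pow_succ, div_mul_cancel_left₀ (pow_ne_zero n (sub_ne_zero.2 hz))]
  simpa only [hpow] using hDn.div hfn

theorem wirtingerDBar_div_self_isBigO_one (hΩ : IsOpen Ω) (hz₀ : z₀ ∈ closure Ω)
    (hf : ContDiffAt ℝ ∞ f z₀) (hol : ∀ᶠ z in 𝓝[Ω] z₀, DifferentiableAt ℂ f z) (hfz₀ : f z₀ = 0)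
    (hfin : ¬ VanishesInfiniteOrder f z₀) :
    (fun z ↦ wirtingerDBar f z / f z) =O[𝓝 z₀] fun _ ↦ (1 : ℝ) := by
  obtain ⟨n, hfn, -⟩ := exists_isTheta_pow_succ_and_wirtingerD_isTheta_pow hΩ hz₀ hf hol hfz₀ hfin
  have hDBar : wirtingerDBar f =O[𝓝 z₀] f := by
    refine IsBigO.trans ?_ hfn.isBigO_symm
    simpa only [← norm_pow, isBigO_norm_right] using
      (wirtingerDBar_isLittleO_pow (n := n + 1) hΩ hz₀ (hf.of_le (mod_cast le_top)) hol).isBigO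
  have hdiv : (fun z ↦ f z / f z) =O[𝓝 z₀] fun _ ↦ (1 : ℝ) :=
    .of_norm_le fun z ↦ by simpa only [norm_div] using div_self_le_one ‖f z‖
  simpa only [div_eq_mul_inv] using (hDBar.mul (isBigO_refl (fun z ↦ (f z)⁻¹) _)).trans hdiv

end LogarithmicDerivative

theorem finite_order_divergence_characterization_general {Ω W : Set ℂ} {z₀ : ℂ} {f : ℂ → ℂ}
    (hΩ : IsOpen Ω) (hz₀ : z₀ ∈ closure Ω) (hW : W ∈ 𝓝 z₀) (hf : ContDiffOn ℝ ∞ f W)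
    (hol : DifferentiableOn ℂ f (W ∩ Ω)) (hfz₀ : f z₀ = 0) (hfin : ¬ VanishesInfiniteOrder f z₀) :
    ∃ U : Set ℂ, IsOpen U ∧ z₀ ∈ U ∧ U ⊆ W ∧
      (∫⁻ z in U, ENNReal.ofReal (‖wirtingerDBar f z‖ ^ 2 / ‖f z‖ ^ 2) < ⊤) ∧
      ∫⁻ z in U, ENNReal.ofReal (‖wirtingerD f z‖ ^ 2 / ‖f z‖ ^ 2) = ⊤ := by
  have hfsmooth : ContDiffAt ℝ ∞ f z₀ := hf.contDiffAt hW
  have hfhol : ∀ᶠ z in 𝓝[Ω] z₀, DifferentiableAt ℂ f z := by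
    filter_upwards [self_mem_nhdsWithin,
      mem_nhdsWithin_of_mem_nhds (eventually_mem_nhds_iff.2 hW)] with z hzΩ hzW
    exact hol.differentiableAt (inter_mem hzW (hΩ.mem_nhds hzΩ))
  have hquot (a b : ℂ) : ENNReal.ofReal (‖a‖ ^ 2 / ‖b‖ ^ 2) = ‖(a / b) ^ 2‖ₑ := by
    rw [← ofReal_norm, norm_pow, norm_div, div_pow]
  simp only [hquot]
  obtain ⟨V, hV, hVfin⟩ : ∃ V ∈ 𝓝 z₀, ∫⁻ z in V, ‖(wirtingerDBar f z / f z) ^ 2‖ₑ < ⊤ := by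
    refine exists_mem_setLIntegral_enorm_lt_top_of_isBigO
      ((wirtingerDBar_div_self_isBigO_one hΩ hz₀ hfsmooth hfhol hfz₀ hfin).pow 2) ?_
    simpa [Measure.FiniteAtFilter] using volume.finiteAt_nhds z₀
  refine ⟨interior (V ∩ W), isOpen_interior, mem_interior_iff_mem_nhds.2 (inter_mem hV hW),
    interior_subset.trans inter_subset_right, ?_, ?_⟩
  · exact (lintegral_mono_set (interior_subset.trans inter_subset_left)).trans_lt hVfin
  · refine setLIntegral_enorm_eq_top_of_inv_norm_pow_isBigO volume ?_
      (interior_mem_nhds.2 (inter_mem hV hW))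
    have hD := wirtingerD_div_self_isTheta_inv hΩ hz₀ hfsmooth hfhol hfz₀ hfin
    simpa using (hD.isBigO_symm.pow 2).norm_left

/-- Proposition 5.2(1): a smooth extension `ũ` across a boundary point `z₀` of a
nonconstant holomorphic function, with `ũ(z₀) = 0` vanishing to finite order,
satisfies `∫_U |∂̄ũ|²/|ũ|² < ∞` and `∫_U |∂ũ|²/|ũ|² = ∞` on some neighborhood `U`
of `z₀`. -/
theorem finite_order_divergence_characterization
    (Ω : Set ℂ) (hΩopen : IsOpen Ω) (hΩconn : IsConnected Ω)
    (z₀ : ℂ) (hz₀ : z₀ ∈ frontier Ω)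
    (u : ℂ → ℂ) (hu : DifferentiableOn ℂ u Ω)
    (hnonconst : ¬ ∃ c : ℂ, Set.EqOn u (fun _ => c) Ω)
    (W : Set ℂ) (hWopen : IsOpen W) (hz₀W : z₀ ∈ W)
    (ut : ℂ → ℂ) (hsmooth : ContDiffOn ℝ (⊤ : ℕ∞) ut W)
    (hagree : Set.EqOn ut u (W ∩ Ω)) (hut0 : ut z₀ = 0)
    (hfin : ¬ VanishesInfiniteOrder ut z₀) :
    ∃ U : Set ℂ, IsOpen U ∧ z₀ ∈ U ∧ U ⊆ W ∧
      (∫⁻ z in U, ENNReal.ofReal (‖wirtingerDBar ut z‖ ^ 2 / ‖ut z‖ ^ 2) < ⊤) ∧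
      ∫⁻ z in U, ENNReal.ofReal (‖wirtingerD ut z‖ ^ 2 / ‖ut z‖ ^ 2) = ⊤ := by
  exact finite_order_divergence_characterization_general hΩopen (frontier_subset_closure hz₀)
    (hWopen.mem_nhds hz₀W) hsmooth ((hu.mono inter_subset_right).congr hagree) hut0 hfin
end

section
/- Let Ω ⊆ ℂ be a nonempty open connected set, z₀ a frontier point of Ω, and u : ℂ → ℂ holomorphic on Ω and nonconstant on Ω. Let W be an open neighborhood of z₀ and ũ : ℂ → ℂ a function that is C^∞ on W, agrees with u on W ∩ Ω, and satisfies ũ(z₀) = 0. If ũ vanishes to infinite order at z₀ in the L² sense, then for every open ball B = B(z₀,r) with B ⊆ W, the lower Lebesgue integral ∫_B |∂̄ũ(z)|²/|ũ(z)|² dv is infinite. -/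
/-!
Write `V = |∂̄f|² / |f|²` and `L = log (|f|² + ε) / 2`. Away from the zeros of `f`, `∇ log |f|` is
`2 f̄ ∂̄f / |f|²` plus a rotated copy of `∇ arg f`, which is divergence free. The regularised `ΔL`
is therefore `2 div (f̄ ∂̄f / (|f|² + ε))` plus a term bounded below by `-2V`, and completing the
square turns this into `-3 ∫ V ≤ ∫ (L - ψ) Δψ` for all test functions `0 ≤ ψ ≤ 1`.

Suppose `∫ V < ∞` near `z₀` although `f z₁ ≠ 0` for some `z₁ ≠ z₀` nearby. Cubing the positive part
of a Hopf barrier plus a small logarithmic pole at scale `δ` gives `ψ` that is subharmonic off a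
small disc around `z₁`, where `L` is bounded below, and satisfies `Δψ ≥ q / (δ² |log δ|)` on
`B(z₀, δ)`. With `ε = δ^(2m)`, infinite order vanishing gives
`∫_{B(z₀, δ)} L ≤ δ² (π m log δ + 1/2)`, so `-3 ∫ V ≤ C - q (π m - 1/2)` for every `m`, which is
absurd. Hence `f` vanishes near `z₀`, and a holomorphic function that agrees with `f` on a domain
adherent to `z₀` vanishes identically.
-/

open MeasureTheory

open Filter Metric InnerProductSpace
open scoped Topology Gradient Laplacian RealInnerProductSpace ComplexConjugate

section VectorCalculus

variable {E : Type*} [NormedAddCommGroup E] [InnerProductSpace ℝ E]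

/-- The divergence of a vector field on a Euclidean space, as the trace of its derivative. -/
noncomputable def divergence (X : E → E) (x : E) : ℝ :=
  LinearMap.trace ℝ E (fderiv ℝ X x)

theorem divergence_eq_sum_inner {ι : Type*} [Fintype ι] (b : OrthonormalBasis ι ℝ E)
    (X : E → E) (x : E) : divergence X x = ∑ i, ⟪b i, fderiv ℝ X x (b i)⟫ :=
  LinearMap.trace_eq_sum_inner _ b

theorem divergence_sub {X Y : E → E} {x : E} (hX : DifferentiableAt ℝ X x)
    (hY : DifferentiableAt ℝ Y x) :
    divergence (X - Y) x = divergence X x - divergence Y x := by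
  simp [divergence, fderiv_sub hX hY]

theorem divergence_const_smul {X : E → E} {x : E} {c : ℝ} (hX : DifferentiableAt ℝ X x) :
    divergence (c • X) x = c * divergence X x := by
  simp [divergence, fderiv_const_smul hX]

theorem hasCompactSupport_divergence {X : E → E} (hc : HasCompactSupport X) :
    HasCompactSupport (divergence X) :=
  (hc.fderiv (𝕜 := ℝ)).mono fun x hx h => hx (by simp [divergence, h])

section Gradient

variable [CompleteSpace E] {g : E → ℝ} {x : E}

theorem contDiffAt_gradient {n : ℕ} (hg : ContDiffAt ℝ (n + 1) g x) : ContDiffAt ℝ n (∇ g) x :=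
  (toDual ℝ E).symm.contDiff.contDiffAt.comp x (hg.fderiv_right le_rfl)

theorem contDiff_gradient {n : ℕ} (hg : ContDiff ℝ (n + 1) g) : ContDiff ℝ n (∇ g) :=
  contDiff_iff_contDiffAt.2 fun _ => contDiffAt_gradient hg.contDiffAt

theorem hasCompactSupport_gradient (hc : HasCompactSupport g) : HasCompactSupport (∇ g) :=
  (hc.fderiv (𝕜 := ℝ)).comp_left (map_zero (toDual ℝ E).symm)

theorem hasGradientAt_comp_real {F : ℝ → ℝ} {F' : ℝ} {g' : E} (hg : HasGradientAt g g' x)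
    (hF : HasDerivAt F F' (g x)) : HasGradientAt (fun y => F (g y)) (F' • g') x := by
  rw [hasGradientAt_iff_hasFDerivAt, map_smul]
  exact hF.comp_hasFDerivAt x hg.hasFDerivAt

end Gradient

variable [FiniteDimensional ℝ E] {g φ : E → ℝ} {X : E → E} {x : E}

theorem divergence_smul (hφ : DifferentiableAt ℝ φ x) (hX : DifferentiableAt ℝ X x) :
    divergence (φ • X) x = φ x * divergence X x + ⟪∇ φ x, X x⟫ := by
  simp [divergence, fderiv_smul hφ hX]

theorem laplacian_eq_divergence_gradient (hg : DifferentiableAt ℝ (∇ g) x) :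
    Δ g x = divergence (∇ g) x := by
  have h : fderiv ℝ g = fun y => innerSL ℝ (∇ g y) := by
    ext y v
    simp
  have hd : fderiv ℝ (fderiv ℝ g) x = innerSL ℝ ∘L fderiv ℝ (∇ g) x := by
    rw [h]
    exact ((innerSL ℝ).hasFDerivAt.comp x hg.hasFDerivAt).fderiv
  have hd' (v : E) : ⟪v, fderiv ℝ (∇ g) x v⟫ = fderiv ℝ (fderiv ℝ g) x v v := by
    rw [hd, real_inner_comm]
    rfl
  simp [divergence_eq_sum_inner (stdOrthonormalBasis ℝ E), hd',
    laplacian_eq_iteratedFDeriv_stdOrthonormalBasis, iteratedFDeriv_two_apply]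

theorem laplacian_comp_real {F F' : ℝ → ℝ} {F'' : ℝ} (hF : ∀ᶠ t in 𝓝 (g x), HasDerivAt F (F' t) t)
    (hF' : HasDerivAt F' F'' (g x)) (hg : ContDiffAt ℝ 2 g x) :
    Δ (fun y => F (g y)) x = F' (g x) * Δ g x + F'' * ‖∇ g x‖ ^ 2 := by
  have hgx := hg.differentiableAt two_ne_zero
  have hgrad : ∇ (fun y => F (g y)) =ᶠ[𝓝 x] (fun y => F' (g y)) • ∇ g := by
    filter_upwards [hg.continuousAt.eventually hF, hg.eventually (by simp)] with y hFy hgy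
    exact (hasGradientAt_comp_real (hgy.differentiableAt two_ne_zero).hasGradientAt hFy).gradient
  have hF'g := hasGradientAt_comp_real hgx.hasGradientAt hF'
  have hdg : DifferentiableAt ℝ (∇ g) x :=
    (contDiffAt_gradient (n := 1) hg).differentiableAt one_ne_zero
  have hd : DifferentiableAt ℝ (∇ fun y => F (g y)) x :=
    (hF'g.differentiableAt.smul hdg).congr_of_eventuallyEq hgrad
  rw [laplacian_eq_divergence_gradient hd, divergence, hgrad.fderiv_eq, ← divergence,
    divergence_smul hF'g.differentiableAt hdg, hF'g.gradient, laplacian_eq_divergence_gradient hdg,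
    real_inner_smul_left, real_inner_self_eq_norm_sq]

theorem continuous_divergence (hX : ContDiff ℝ 1 X) : Continuous (divergence X) := by
  have := hX.continuous_fderiv one_ne_zero
  simp only [funext (divergence_eq_sum_inner (stdOrthonormalBasis ℝ E) X)]
  fun_prop

theorem continuous_laplacian (hg : ContDiff ℝ 2 g) : Continuous (Δ g) := by
  have hd : ContDiff ℝ 1 (∇ g) := contDiff_gradient hg
  exact (continuous_divergence hd).congr fun x =>
    (laplacian_eq_divergence_gradient (hd.differentiable one_ne_zero x)).symm

theorem hasCompactSupport_laplacian (hc : HasCompactSupport g) : HasCompactSupport (Δ g) := by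
  refine hc.mono' (Function.support_subset_iff'.2 fun x hx => ?_)
  have h : g =ᶠ[𝓝 x] fun _ => 0 := notMem_tsupport_iff_eventuallyEq.1 hx
  simpa using (laplacian_congr_nhds h).eq_of_nhds

variable [MeasurableSpace E] [BorelSpace E] (μ : Measure E) [μ.IsAddHaarMeasure]

theorem integral_divergence_eq_zero (hX : ContDiff ℝ 1 X) (hc : HasCompactSupport X) :
    ∫ x, divergence X x ∂μ = 0 := by
  have hint (v : E) : Integrable (fun x => fderiv ℝ X x v) μ :=
    ((hX.continuous_fderiv one_ne_zero).clm_apply continuous_const).integrable_of_hasCompactSupport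
      (hc.fderiv_apply (𝕜 := ℝ) v)
  have hzero (v : E) : ∫ x, fderiv ℝ X x v ∂μ = 0 := by
    simpa using integral_smul_fderiv_eq_neg_fderiv_smul_of_integrable (μ := μ) (v := v)
      (f := fun _ => (1 : ℝ)) (g := X) (by simp) (by simpa using hint v)
      (by simpa using hX.continuous.integrable_of_hasCompactSupport hc)
      (fun _ _ => differentiableAt_const _) fun x _ => hX.differentiable one_ne_zero x
  simp_rw [divergence_eq_sum_inner (stdOrthonormalBasis ℝ E)]
  rw [integral_finsetSum _ fun i _ => (hint _).const_inner _]
  simp [integral_inner (hint _), hzero]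

theorem integral_mul_divergence (hφ : ContDiff ℝ 1 φ) (hX : ContDiff ℝ 1 X)
    (hc : HasCompactSupport φ ∨ HasCompactSupport X) :
    ∫ x, φ x * divergence X x ∂μ = -∫ x, ⟪∇ φ x, X x⟫ ∂μ := by
  have hdiv := continuous_divergence hX
  have hgrad : Continuous (∇ φ) := (contDiff_gradient (n := 0) hφ).continuous
  rw [eq_neg_iff_add_eq_zero, ← integral_add]
  · simp_rw [← divergence_smul (hφ.differentiable one_ne_zero _) (hX.differentiable one_ne_zero _)]
    exact integral_divergence_eq_zero μ (hφ.smul hX)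
      (hc.elim (fun h => h.smul_right) fun h => h.smul_left)
  · exact (hφ.continuous.mul hdiv).integrable_of_hasCompactSupport
      (hc.elim (fun h => h.mul_right) fun h => (hasCompactSupport_divergence h).mul_left)
  · refine (hgrad.inner hX.continuous).integrable_of_hasCompactSupport ?_
    rcases hc with hc | hc
    · exact (hasCompactSupport_gradient hc).mono fun x hx h => hx (by simp [h])
    · exact hc.mono fun x hx h => hx (by simp [h])

theorem integral_mul_laplacian {ψ : E → ℝ} (hφ : ContDiff ℝ 1 φ) (hψ : ContDiff ℝ 2 ψ)
    (hc : HasCompactSupport φ ∨ HasCompactSupport ψ) :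
    ∫ x, φ x * Δ ψ x ∂μ = -∫ x, ⟪∇ φ x, ∇ ψ x⟫ ∂μ := by
  have hdψ : ContDiff ℝ 1 (∇ ψ) := contDiff_gradient hψ
  simp_rw [laplacian_eq_divergence_gradient (hdψ.differentiable one_ne_zero _)]
  exact integral_mul_divergence μ hφ hdψ (hc.imp_right hasCompactSupport_gradient)

theorem integral_laplacian_eq_zero (hg : ContDiff ℝ 2 g) (hc : HasCompactSupport g) :
    ∫ x, Δ g x ∂μ = 0 := by
  have hdg : ContDiff ℝ 1 (∇ g) := contDiff_gradient hg
  simp_rw [laplacian_eq_divergence_gradient (hdg.differentiable one_ne_zero _)]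
  exact integral_divergence_eq_zero μ hdg (hasCompactSupport_gradient hc)

theorem integral_mul_laplacian_comm {ψ : E → ℝ} (hφ : ContDiff ℝ 2 φ) (hψ : ContDiff ℝ 2 ψ)
    (hc : HasCompactSupport ψ) :
    ∫ x, φ x * Δ ψ x ∂μ = ∫ x, ψ x * Δ φ x ∂μ := by
  rw [integral_mul_laplacian μ (hφ.of_le one_le_two) hψ (.inr hc),
    integral_mul_laplacian μ (hψ.of_le one_le_two) hφ (.inl hc)]
  simp_rw [real_inner_comm]

end VectorCalculus

section LogPotential

theorem det_eq_im_conj_mul (A : ℂ →L[ℝ] ℂ) : A.det = (conj (A 1) * A Complex.I).im := by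
  rw [ContinuousLinearMap.det, ← LinearMap.det_toMatrix Complex.basisOneI, Matrix.det_fin_two]
  simp only [LinearMap.toMatrix_apply, Complex.coe_basisOneI, Matrix.cons_val_zero,
    ContinuousLinearMap.coe_coe, Complex.coe_basisOneI_repr, Matrix.cons_val_one,
    Matrix.cons_val_fin_one, Complex.mul_im, Complex.conj_re, Complex.conj_im]
  ring

theorem neg_norm_wirtingerDBar_sq_le_det (f : ℂ → ℂ) (z : ℂ) :
    -‖wirtingerDBar f z‖ ^ 2 ≤ (fderiv ℝ f z).det := by
  rw [det_eq_im_conj_mul, wirtingerDBar, ← Complex.normSq_eq_norm_sq]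
  set a := fderiv ℝ f z 1
  set b := fderiv ℝ f z Complex.I
  have h : 4 * Complex.normSq ((a + Complex.I * b) / 2) =
      a.re ^ 2 + a.im ^ 2 + b.re ^ 2 + b.im ^ 2 - 2 * (conj a * b).im := by
    rw [map_div₀, Complex.normSq_ofNat]
    simp only [Complex.normSq_apply, Complex.add_re, Complex.add_im, Complex.mul_re, Complex.mul_im,
      Complex.I_re, Complex.I_im, Complex.conj_re, Complex.conj_im]
    ring
  have h' : (conj a * b).im = a.re * b.im - a.im * b.re := by
    simp only [Complex.mul_im, Complex.conj_re, Complex.conj_im]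
    ring
  linarith [sq_nonneg (a.re + b.im), sq_nonneg (a.im - b.re)]

theorem gradient_complex (g : ℂ → ℝ) (z : ℂ) :
    ∇ g z = ⟨fderiv ℝ g z 1, fderiv ℝ g z Complex.I⟩ := by
  apply Complex.ext <;> simp [← inner_gradient_left, Complex.inner]

theorem divergence_complex_mk {a b : ℂ → ℝ} {a' b' : ℂ →L[ℝ] ℝ} {z : ℂ} (ha : HasFDerivAt a a' z)
    (hb : HasFDerivAt b b' z) : divergence (fun w => ⟨a w, b w⟩) z = a' 1 + b' Complex.I := by
  have h : fderiv ℝ (fun w => (⟨a w, b w⟩ : ℂ)) z =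
      Complex.equivRealProdCLM.symm ∘L a'.prod b' :=
    (Complex.equivRealProdCLM.symm.hasFDerivAt.comp z (ha.prodMk hb)).fderiv
  simp [divergence_eq_sum_inner Complex.orthonormalBasisOneI, h, Complex.inner]

variable {f : ℂ → ℂ} {z : ℂ} {ε : ℝ}

/-- The field `i |f|² ∇θ` for `f = |f| exp (iθ)`, written as the rotation by a right angle of
`Im (f̄ ∇f)` so that it makes sense at the zeros of `f`. -/
noncomputable def phaseCurrent (f : ℂ → ℂ) (z : ℂ) : ℂ :=
  ⟨-(conj (f z) * fderiv ℝ f z Complex.I).im, (conj (f z) * fderiv ℝ f z 1).im⟩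

theorem contDiff_phaseCurrent (hf : ContDiff ℝ 2 f) : ContDiff ℝ 1 (phaseCurrent f) := by
  have := hf.fderiv_right (m := 1) le_rfl
  have hcross (v : ℂ) : ContDiff ℝ 1 fun z => (conj (f z) * fderiv ℝ f z v).im :=
    Complex.imCLM.contDiff.comp
      ((Complex.conjCLE.contDiff.comp (hf.of_le one_le_two)).mul (by fun_prop))
  exact Complex.equivRealProdCLM.symm.contDiff.comp ((hcross _).neg.prodMk (hcross _))

theorem divergence_phaseCurrent (hf : ContDiff ℝ 2 f) :
    divergence (phaseCurrent f) z = -2 * (fderiv ℝ f z).det := by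
  have hd := (hf.differentiable two_ne_zero z).hasFDerivAt
  have hd2 (v : ℂ) : HasFDerivAt (fun w => fderiv ℝ f w v)
      (ContinuousLinearMap.apply ℝ ℂ v ∘L fderiv ℝ (fderiv ℝ f) z) z :=
    (ContinuousLinearMap.apply ℝ ℂ v).hasFDerivAt.comp z
      ((hf.fderiv_right (m := 1) le_rfl).differentiable one_ne_zero z).hasFDerivAt
  have hsymm : fderiv ℝ (fderiv ℝ f) z 1 Complex.I = fderiv ℝ (fderiv ℝ f) z Complex.I 1 :=
    hf.contDiffAt.isSymmSndFDerivAt (by simp) _ _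
  have hcross (v : ℂ) : HasFDerivAt (fun w => (conj (f w) * fderiv ℝ f w v).im) _ z :=
    Complex.imCLM.hasFDerivAt.comp z ((Complex.conjCLE.hasFDerivAt.comp z hd).mul (hd2 v))
  refine (divergence_complex_mk (hcross Complex.I).neg (hcross 1)).trans ?_
  rw [det_eq_im_conj_mul]
  simp only [ContinuousAlgEquiv.coe_coeCLE, Function.comp_apply, Complex.conjCAE_apply,
    ContinuousLinearMap.comp_add, neg_add_rev, add_apply, neg_apply,
    ContinuousLinearMap.comp_apply, smul_apply, ContinuousLinearEquiv.coe_coe,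
    ContinuousAlgEquiv.coeCLE_apply, smul_eq_mul, Complex.imCLM_apply, Complex.mul_im,
    Complex.conj_im, Complex.conj_re, ContinuousLinearMap.apply_apply, hsymm]
  ring

theorem hasGradientAt_norm_sq_add (hf : DifferentiableAt ℝ f z) (ε : ℝ) :
    HasGradientAt (fun w => ‖f w‖ ^ 2 + ε) ⟨2 * (conj (f z) * fderiv ℝ f z 1).re,
      2 * (conj (f z) * fderiv ℝ f z Complex.I).re⟩ z := by
  have h : HasFDerivAt (fun w => ‖f w‖ ^ 2 + ε) _ z := hf.hasFDerivAt.norm_sq.add_const ε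
  convert h.differentiableAt.hasGradientAt using 1
  rw [gradient_complex, h.fderiv]
  simp [Complex.inner, mul_add, mul_comm, mul_left_comm]

theorem inner_gradient_phaseCurrent (hf : DifferentiableAt ℝ f z) :
    ⟪∇ (fun w => ‖f w‖ ^ 2 + ε) z, phaseCurrent f z⟫ = -2 * ‖f z‖ ^ 2 * (fderiv ℝ f z).det := by
  rw [(hasGradientAt_norm_sq_add hf ε).gradient, phaseCurrent, det_eq_im_conj_mul,
    ← Complex.normSq_eq_norm_sq]
  simp only [Complex.inner, Complex.normSq_apply, Complex.mul_re, Complex.mul_im, Complex.conj_re,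
    Complex.conj_im]
  ring

/-- The field `f̄ ∂̄f / (|f|² + ε)`, the part of `∇ log (|f|² + ε)` controlled by `∂̄f`. -/
noncomputable def dbarField (f : ℂ → ℂ) (ε : ℝ) (z : ℂ) : ℂ :=
  (‖f z‖ ^ 2 + ε)⁻¹ • (conj (f z) * wirtingerDBar f z)

theorem norm_sq_add_pos (hε : 0 < ε) (w : ℂ) : 0 < ‖w‖ ^ 2 + ε := by positivity

theorem contDiff_wirtingerDBar (hf : ContDiff ℝ 2 f) : ContDiff ℝ 1 (wirtingerDBar f) := by
  have := hf.fderiv_right (m := 1) le_rfl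
  unfold wirtingerDBar
  fun_prop

theorem contDiff_norm_sq_add {n : ℕ} (hf : ContDiff ℝ n f) :
    ContDiff ℝ n fun z => ‖f z‖ ^ 2 + ε :=
  (hf.norm_sq ℝ).add contDiff_const

theorem contDiff_inv_norm_sq_add {n : ℕ} (hf : ContDiff ℝ n f) (hε : 0 < ε) :
    ContDiff ℝ n fun z => (‖f z‖ ^ 2 + ε)⁻¹ :=
  (contDiff_norm_sq_add hf).inv fun _ => by positivity

theorem contDiff_log_norm_sq_add {n : ℕ} (hf : ContDiff ℝ n f) (hε : 0 < ε) :
    ContDiff ℝ n fun z => Real.log (‖f z‖ ^ 2 + ε) / 2 :=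
  ((contDiff_norm_sq_add hf).log fun _ => by positivity).div_const _

theorem contDiff_dbarField (hf : ContDiff ℝ 2 f) (hε : 0 < ε) : ContDiff ℝ 1 (dbarField f ε) :=
  (contDiff_inv_norm_sq_add (hf.of_le one_le_two) hε).smul
    ((Complex.conjCLE.contDiff.comp (hf.of_le one_le_two)).mul (contDiff_wirtingerDBar hf))

theorem gradient_log_norm_sq_add (hf : DifferentiableAt ℝ f z) (hε : 0 < ε) :
    ∇ (fun w => Real.log (‖f w‖ ^ 2 + ε) / 2) z =
      (2 : ℝ) • dbarField f ε z - (‖f z‖ ^ 2 + ε)⁻¹ • phaseCurrent f z := by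
  have hlog := (Real.hasDerivAt_log (norm_sq_add_pos hε (f z)).ne').div_const 2
  rw [(hasGradientAt_comp_real (hasGradientAt_norm_sq_add hf ε) hlog).gradient, dbarField,
    phaseCurrent, wirtingerDBar]
  apply Complex.ext <;>
  · simp only [Complex.sub_re, Complex.sub_im, Complex.smul_re, Complex.smul_im, smul_eq_mul,
      Complex.mul_re, Complex.mul_im, Complex.conj_re, Complex.conj_im, Complex.div_ofNat_re,
      Complex.div_ofNat_im, Complex.add_re, Complex.add_im, Complex.I_re, Complex.I_im]
    ring

theorem divergence_smul_phaseCurrent (hf : ContDiff ℝ 2 f) (hε : 0 < ε) :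
    divergence ((fun w => (‖f w‖ ^ 2 + ε)⁻¹) • phaseCurrent f) z =
      -2 * ε * (fderiv ℝ f z).det / (‖f z‖ ^ 2 + ε) ^ 2 := by
  have hN := hasGradientAt_norm_sq_add (hf.differentiable two_ne_zero z) ε
  have hpos := norm_sq_add_pos hε (f z)
  rw [divergence_smul ((contDiff_inv_norm_sq_add hf hε).differentiable two_ne_zero z)
    ((contDiff_phaseCurrent hf).differentiable one_ne_zero z),
    (hasGradientAt_comp_real hN (hasDerivAt_inv hpos.ne')).gradient, real_inner_smul_left,
    ← hN.gradient, inner_gradient_phaseCurrent (hf.differentiable two_ne_zero z),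
    divergence_phaseCurrent hf]
  field_simp
  ring

theorem laplacian_log_norm_sq_add (hf : ContDiff ℝ 2 f) (hε : 0 < ε) :
    Δ (fun w => Real.log (‖f w‖ ^ 2 + ε) / 2) z = 2 * divergence (dbarField f ε) z +
      2 * ε * (fderiv ℝ f z).det / (‖f z‖ ^ 2 + ε) ^ 2 := by
  have hdL : DifferentiableAt ℝ (∇ fun w => Real.log (‖f w‖ ^ 2 + ε) / 2) z :=
    (contDiff_gradient (n := 1) (contDiff_log_norm_sq_add hf hε)).differentiable one_ne_zero z
  have hdG := (contDiff_dbarField hf hε).differentiable one_ne_zero z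
  have hdK := ((contDiff_inv_norm_sq_add (hf.of_le one_le_two) hε).smul
    (contDiff_phaseCurrent hf)).differentiable one_ne_zero z
  have hgrad : ∇ (fun w => Real.log (‖f w‖ ^ 2 + ε) / 2) =
      (2 : ℝ) • dbarField f ε - (fun w => (‖f w‖ ^ 2 + ε)⁻¹) • phaseCurrent f :=
    funext fun w => gradient_log_norm_sq_add (hf.differentiable two_ne_zero w) hε
  rw [laplacian_eq_divergence_gradient hdL, hgrad, divergence_sub (hdG.const_smul _) hdK,
    divergence_const_smul hdG, divergence_smul_phaseCurrent hf hε]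
  ring

theorem norm_dbarField_sq_le (f : ℂ → ℂ) (hε : 0 < ε) (z : ℂ) :
    ‖dbarField f ε z‖ ^ 2 ≤ ‖wirtingerDBar f z‖ ^ 2 / ‖f z‖ ^ 2 := by
  rcases eq_or_ne (f z) 0 with h | h
  · simp [dbarField, h]
  have : 0 < ‖f z‖ := norm_pos_iff.2 h
  have hN := norm_sq_add_pos hε (f z)
  simp only [dbarField, norm_smul, norm_inv, norm_mul, RCLike.norm_conj, Real.norm_of_nonneg hN.le]
  rw [mul_pow, mul_pow, inv_pow, ← div_eq_inv_mul, div_le_div_iff₀ (by positivity) (by positivity)]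
  have hle : ‖f z‖ ^ 2 * ‖f z‖ ^ 2 ≤ (‖f z‖ ^ 2 + ε) ^ 2 := by nlinarith [sq_nonneg ‖f z‖]
  linarith [mul_le_mul_of_nonneg_left hle (sq_nonneg ‖wirtingerDBar f z‖)]

theorem mul_norm_sq_div_sq_le (hε : 0 < ε) {a w : ℂ} (h : w = 0 → a = 0) :
    ε * ‖a‖ ^ 2 / (‖w‖ ^ 2 + ε) ^ 2 ≤ ‖a‖ ^ 2 / ‖w‖ ^ 2 := by
  rcases eq_or_ne w 0 with hw | hw
  · simp [h hw, hw]
  have : 0 < ‖w‖ := norm_pos_iff.2 hw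
  rw [div_le_div_iff₀ (by positivity) (by positivity)]
  have hle : ε * ‖w‖ ^ 2 ≤ (‖w‖ ^ 2 + ε) ^ 2 := by nlinarith [sq_nonneg ‖w‖, sq_nonneg (‖w‖ ^ 2)]
  linarith [mul_le_mul_of_nonneg_left hle (sq_nonneg ‖a‖)]

theorem ae_fderiv_eq_zero_of_apply_eq_zero {E : Type*} [NormedAddCommGroup E] [NormedSpace ℝ E]
    [FiniteDimensional ℝ E] [MeasurableSpace E] [BorelSpace E] (μ : Measure E)
    [μ.IsAddHaarMeasure] {f : E → E} (hf : Differentiable ℝ f) :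
    ∀ᵐ x ∂μ, f x = 0 → fderiv ℝ f x = 0 := by
  have hs : MeasurableSet {x | f x = 0} :=
    (isClosed_singleton.preimage hf.continuous).measurableSet
  have happrox : ApproximatesLinearOn f (0 : E →L[ℝ] E) {x | f x = 0} 0 := by
    intro x hx y hy
    simp [hx.out, hy.out]
  have hnorm := happrox.norm_fderiv_sub_le μ hs (fderiv ℝ f)
    fun x _ => (hf x).hasFDerivAt.hasFDerivWithinAt
  rw [ae_restrict_iff' hs] at hnorm
  filter_upwards [hnorm] with x hx hfx
  simpa using hx hfx

theorem gradient_eq_zero_of_nonneg {E : Type*} [NormedAddCommGroup E] [InnerProductSpace ℝ E]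
    [CompleteSpace E] {ψ : E → ℝ} {x : E} (hψ : 0 ≤ ψ) (hx : ψ x = 0) : ∇ ψ x = 0 := by
  have hmin : IsLocalMin ψ x := Eventually.of_forall fun y => hx.trans_le (hψ y)
  rw [gradient, hmin.fderiv_eq_zero, map_zero]

theorem neg_three_mul_le_of_mem_Icc {G p : ℂ} {w J D V : ℝ} (hw : w ∈ Set.Icc 0 1)
    (hG : ‖G‖ ^ 2 ≤ V) (hD : D ≤ V) (hJ : -D ≤ J) :
    -3 * V ≤ -2 * ⟪p, G⟫ + 2 * w * J + ‖p‖ ^ 2 := by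
  have hsq : 0 ≤ ‖p - G‖ ^ 2 := sq_nonneg _
  rw [norm_sub_sq_real] at hsq
  have hVn : 0 ≤ V := (sq_nonneg _).trans hG
  have hwJ : -(w * V) ≤ w * J := by
    linarith [mul_le_mul_of_nonneg_left (show -V ≤ J by linarith) hw.1]
  linarith [mul_le_mul_of_nonneg_right hw.2 hVn]

section TestInequality

variable {ψ : ℂ → ℝ} {s : Set ℂ}

theorem ae_indicator_neg_three_mul_le (hf : ContDiff ℝ 2 f) (hψ : ContDiff ℝ 2 ψ) (hε : 0 < ε)
    (hψI : ∀ z, ψ z ∈ Set.Icc 0 1) (hψs : ∀ z ∉ s, ψ z = 0) :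
    ∀ᵐ z, s.indicator (fun z => -3 * (‖wirtingerDBar f z‖ ^ 2 / ‖f z‖ ^ 2)) z ≤
      ψ z * Δ (fun w => Real.log (‖f w‖ ^ 2 + ε) / 2) z - 2 * divergence (ψ • dbarField f ε) z +
        ⟪∇ ψ z, ∇ ψ z⟫ := by
  filter_upwards [ae_fderiv_eq_zero_of_apply_eq_zero volume (hf.differentiable two_ne_zero)]
    with z hz
  have hrhs : ψ z * Δ (fun w => Real.log (‖f w‖ ^ 2 + ε) / 2) z -
      2 * divergence (ψ • dbarField f ε) z + ⟪∇ ψ z, ∇ ψ z⟫ = -2 * ⟪∇ ψ z, dbarField f ε z⟫ +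
        2 * ψ z * (ε * (fderiv ℝ f z).det / (‖f z‖ ^ 2 + ε) ^ 2) + ‖∇ ψ z‖ ^ 2 := by
    rw [laplacian_log_norm_sq_add hf hε, divergence_smul (hψ.differentiable two_ne_zero z)
      ((contDiff_dbarField hf hε).differentiable one_ne_zero z), real_inner_self_eq_norm_sq]
    ring
  rw [hrhs]
  by_cases hzs : z ∈ s
  · rw [Set.indicator_of_mem hzs]
    refine neg_three_mul_le_of_mem_Icc (hψI z) (norm_dbarField_sq_le f hε z)
      (mul_norm_sq_div_sq_le hε fun h => by simp [wirtingerDBar, hz h]) ?_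
    rw [← neg_div, ← mul_neg]
    gcongr
    exact neg_norm_wirtingerDBar_sq_le_det f z
  · have hgrad := gradient_eq_zero_of_nonneg (fun w => (hψI w).1) (hψs z hzs)
    simp [Set.indicator_of_notMem hzs, hψs z hzs, hgrad]

theorem neg_three_mul_setIntegral_le_integral_mul_laplacian (hf : ContDiff ℝ 2 f)
    (hψ : ContDiff ℝ 2 ψ) (hc : HasCompactSupport ψ) (hε : 0 < ε) (hψI : ∀ z, ψ z ∈ Set.Icc 0 1)
    (hs : MeasurableSet s) (hψs : ∀ z ∉ s, ψ z = 0)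
    (hint : IntegrableOn (fun z => ‖wirtingerDBar f z‖ ^ 2 / ‖f z‖ ^ 2) s) :
    -3 * ∫ z in s, ‖wirtingerDBar f z‖ ^ 2 / ‖f z‖ ^ 2 ≤
      ∫ z, (Real.log (‖f z‖ ^ 2 + ε) / 2 - ψ z) * Δ ψ z := by
  set L : ℂ → ℝ := fun z => Real.log (‖f z‖ ^ 2 + ε) / 2
  have hL : ContDiff ℝ 2 L := contDiff_log_norm_sq_add hf hε
  have hψ₁ := hψ.of_le one_le_two
  have hψΔ := continuous_laplacian hψ
  have hψG : ContDiff ℝ 1 (ψ • dbarField f ε) := hψ₁.smul (contDiff_dbarField hf hε)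
  have hcG : HasCompactSupport (ψ • dbarField f ε) := hc.smul_right
  have hdiv : Integrable (fun z => 2 * divergence (ψ • dbarField f ε) z) :=
    ((continuous_divergence hψG).integrable_of_hasCompactSupport
      (hasCompactSupport_divergence hcG)).const_mul 2
  have hψL : Integrable fun z => ψ z * Δ L z :=
    (hψ.continuous.mul (continuous_laplacian hL)).integrable_of_hasCompactSupport hc.mul_right
  have hgrad : Integrable fun z => ⟪∇ ψ z, ∇ ψ z⟫ := by
    have : Continuous (∇ ψ) := (contDiff_gradient (n := 1) hψ).continuous
    refine (this.inner this).integrable_of_hasCompactSupport ?_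
    exact (hasCompactSupport_gradient hc).mono fun z hz h => hz (by simp [h])
  have hLψ : Integrable fun z => L z * Δ ψ z :=
    (hL.continuous.mul hψΔ).integrable_of_hasCompactSupport
      (hasCompactSupport_laplacian hc).mul_left
  have hψψ : Integrable fun z => ψ z * Δ ψ z :=
    (hψ.continuous.mul hψΔ).integrable_of_hasCompactSupport hc.mul_right
  calc -3 * ∫ z in s, ‖wirtingerDBar f z‖ ^ 2 / ‖f z‖ ^ 2
      = ∫ z, s.indicator (fun z => -3 * (‖wirtingerDBar f z‖ ^ 2 / ‖f z‖ ^ 2)) z := by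
        rw [integral_indicator hs, integral_const_mul]
    _ ≤ ∫ z, (ψ z * Δ L z - 2 * divergence (ψ • dbarField f ε) z + ⟪∇ ψ z, ∇ ψ z⟫) :=
        integral_mono_ae ((integrable_indicator_iff hs).2 (hint.const_mul _))
          ((hψL.sub hdiv).add hgrad) (ae_indicator_neg_three_mul_le hf hψ hε hψI hψs)
    _ = (∫ z, ψ z * Δ L z) + ∫ z, ⟪∇ ψ z, ∇ ψ z⟫ := by
        rw [integral_add (by exact hψL.sub hdiv) hgrad, integral_sub hψL hdiv, integral_const_mul,
          integral_divergence_eq_zero volume hψG hcG, mul_zero, sub_zero]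
    _ = (∫ z, L z * Δ ψ z) - ∫ z, ψ z * Δ ψ z := by
        rw [integral_mul_laplacian_comm volume hL hψ hc,
          integral_mul_laplacian volume hψ₁ hψ (.inl hc), sub_neg_eq_add]
    _ = ∫ z, (L z - ψ z) * Δ ψ z := by simp_rw [sub_mul, integral_sub hLψ hψψ]

end TestInequality

end LogPotential

section TestFunction

theorem hasDerivAt_max_zero_pow (n : ℕ) (t : ℝ) :
    HasDerivAt (fun t : ℝ => max t 0 ^ (n + 2)) ((n + 2) * max t 0 ^ (n + 1)) t := by
  refine hasDerivAt_of_hasDerivAt_of_ne' (x := 0) (g := fun t => (n + 2) * max t 0 ^ (n + 1))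
    (fun s hs => ?_) (by fun_prop) (by fun_prop) t
  rcases hs.lt_or_gt with hs | hs
  · refine ((hasDerivAt_const s (0 : ℝ)).congr_of_eventuallyEq ?_).congr_deriv ?_
    · filter_upwards [Iio_mem_nhds hs] with r hr
      simp [max_eq_right (Set.mem_Iio.1 hr).le]
    · simp [max_eq_right hs.le]
  · refine ((hasDerivAt_pow (n + 2) s).congr_of_eventuallyEq ?_).congr_deriv ?_
    · filter_upwards [Ioi_mem_nhds hs] with r hr
      simp [max_eq_left (Set.mem_Ioi.1 hr).le]
    · simp [max_eq_left hs.le]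

theorem hasDerivAt_max_zero_pow_three (t : ℝ) :
    HasDerivAt (fun t : ℝ => max t 0 ^ 3) (3 * max t 0 ^ 2) t :=
  (hasDerivAt_max_zero_pow 1 t).congr_deriv (by norm_num)

theorem hasDerivAt_three_mul_max_zero_sq (t : ℝ) :
    HasDerivAt (fun t : ℝ => 3 * max t 0 ^ 2) (6 * max t 0) t :=
  ((hasDerivAt_max_zero_pow 0 t).const_mul 3).congr_deriv (by ring_nf)

theorem contDiff_max_zero_pow_three : ContDiff ℝ 2 fun t : ℝ => max t 0 ^ 3 := by
  rw [← one_add_one_eq_two, contDiff_succ_iff_deriv,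
    funext fun t => (hasDerivAt_max_zero_pow_three t).deriv, contDiff_one_iff_deriv,
    funext fun t => (hasDerivAt_three_mul_max_zero_sq t).deriv]
  exact ⟨fun t => (hasDerivAt_max_zero_pow_three t).differentiableAt, by simp,
    fun t => (hasDerivAt_three_mul_max_zero_sq t).differentiableAt, by fun_prop⟩

variable {E : Type*} [NormedAddCommGroup E] [InnerProductSpace ℝ E]

theorem hasGradientAt_norm_sub_sq [CompleteSpace E] (w x : E) :
    HasGradientAt (fun y => ‖y - w‖ ^ 2) ((2 : ℝ) • (x - w)) x := by
  rw [hasGradientAt_iff_hasFDerivAt]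
  refine ((hasFDerivAt_id x).sub_const w).norm_sq.congr_fderiv ?_
  ext v
  simp

theorem contDiff_norm_sub_sq (w : E) : ContDiff ℝ 2 fun y => ‖y - w‖ ^ 2 :=
  (contDiff_id.sub contDiff_const).norm_sq ℝ

variable [FiniteDimensional ℝ E]

theorem three_mul_sq_mul_laplacian_le {g : E → ℝ} {x : E} (hg : ContDiffAt ℝ 2 g x) :
    3 * max (g x) 0 ^ 2 * Δ g x ≤ Δ (fun y => max (g y) 0 ^ 3) x := by
  rw [laplacian_comp_real (.of_forall hasDerivAt_max_zero_pow_three)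
    (hasDerivAt_three_mul_max_zero_sq _) hg]
  exact le_add_of_nonneg_right (by positivity)

theorem laplacian_norm_sub_sq (w x : E) :
    Δ (fun y => ‖y - w‖ ^ 2) x = 2 * Module.finrank ℝ E := by
  have hgrad : ∇ (fun y => ‖y - w‖ ^ 2) = (2 : ℝ) • fun y => y - w :=
    funext fun y => (hasGradientAt_norm_sub_sq w y).gradient
  rw [laplacian_eq_divergence_gradient (hgrad ▸ by fun_prop), hgrad,
    divergence_const_smul (by fun_prop), divergence, fderiv_sub_const, fderiv_fun_id]
  simp

theorem laplacian_comp_norm_sub_sq {F F' : ℝ → ℝ} {F'' : ℝ} {w x : E}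
    (hF : ∀ᶠ t in 𝓝 (‖x - w‖ ^ 2), HasDerivAt F (F' t) t)
    (hF' : HasDerivAt F' F'' (‖x - w‖ ^ 2)) :
    Δ (fun y => F (‖y - w‖ ^ 2)) x =
      2 * Module.finrank ℝ E * F' (‖x - w‖ ^ 2) + 4 * ‖x - w‖ ^ 2 * F'' := by
  rw [laplacian_comp_real (g := fun y => ‖y - w‖ ^ 2) hF hF' (contDiff_norm_sub_sq w).contDiffAt,
    laplacian_norm_sub_sq, (hasGradientAt_norm_sub_sq w x).gradient, norm_smul, mul_pow]
  rw [Real.norm_two]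
  ring

theorem laplacian_exp_neg_mul_norm_sub_sq_sub (α c : ℝ) (w x : E) :
    Δ (fun y => Real.exp (-α * ‖y - w‖ ^ 2) - c) x =
      (4 * α ^ 2 * ‖x - w‖ ^ 2 - 2 * Module.finrank ℝ E * α) * Real.exp (-α * ‖x - w‖ ^ 2) := by
  have hexp (t : ℝ) : HasDerivAt (fun t => Real.exp (-α * t)) (-α * Real.exp (-α * t)) t := by
    simpa [mul_comm] using ((hasDerivAt_id t).const_mul (-α)).exp
  rw [laplacian_comp_norm_sub_sq (F := fun t => Real.exp (-α * t) - c)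
    (.of_forall fun t => (hexp t).sub_const c) ((hexp _).const_mul (-α))]
  ring

/-- A barrier for a region `U` with exceptional set `D`: a function `≤ 1` that is nonpositive off
`U` and whose Laplacian is at least `-A` everywhere, and at least `η` at the points off `D` where
the function is nonnegative. -/
structure IsBarrier (g : E → ℝ) (U D : Set E) (A η : ℝ) : Prop where
  contDiff : ContDiff ℝ 2 g
  le_one : ∀ x, g x ≤ 1
  nonpos : ∀ x ∉ U, g x ≤ 0
  neg_le_laplacian : ∀ x, -A ≤ Δ g x
  le_laplacian : ∀ x ∉ D, 0 ≤ g x → η ≤ Δ g x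

/-- A cutoff function supported in `U` that is subharmonic off `D` and whose Laplacian is at least
`-A` everywhere. -/
structure IsTestFunction (ψ : E → ℝ) (U D : Set E) (A : ℝ) : Prop where
  contDiff : ContDiff ℝ 2 ψ
  mem_Icc : ∀ x, ψ x ∈ Set.Icc 0 1
  eq_zero : ∀ x ∉ U, ψ x = 0
  neg_le_laplacian : ∀ x, -A ≤ Δ ψ x
  laplacian_nonneg : ∀ x ∉ D, 0 ≤ Δ ψ x

theorem IsBarrier.isTestFunction_max_zero_pow_three {g : E → ℝ} {U D : Set E} {A : ℝ}
    (hg : IsBarrier g U D A 0) (hA : 0 ≤ A) :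
    IsTestFunction (fun x => max (g x) 0 ^ 3) U D (3 * A) where
  contDiff := contDiff_max_zero_pow_three.comp hg.contDiff
  mem_Icc x := ⟨by positivity, pow_le_one₀ (le_max_right _ _) (max_le (hg.le_one x) zero_le_one)⟩
  eq_zero x hx := by simp [hg.nonpos x hx]
  neg_le_laplacian x := by
    have hsq : max (g x) 0 ^ 2 ≤ 1 :=
      pow_le_one₀ (le_max_right _ _) (max_le (hg.le_one x) zero_le_one)
    calc -(3 * A) ≤ 3 * max (g x) 0 ^ 2 * -A := by linarith [mul_le_mul_of_nonneg_right hsq hA]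
      _ ≤ 3 * max (g x) 0 ^ 2 * Δ g x := by gcongr; exact hg.neg_le_laplacian x
      _ ≤ _ := three_mul_sq_mul_laplacian_le hg.contDiff.contDiffAt
  laplacian_nonneg x hx := by
    refine le_trans ?_ (three_mul_sq_mul_laplacian_le hg.contDiff.contDiffAt)
    rcases le_total 0 (g x) with h | h
    · exact mul_nonneg (by positivity) (hg.le_laplacian x hx h)
    · simp [h]

theorem isBarrier_exp_neg_mul_norm_sub_sq {x₀ x₁ : E} {ρ s R α : ℝ} (hα : 0 ≤ α) (hR : 0 ≤ R)
    (hRρ : R + dist x₁ x₀ ≤ ρ) (hs : 0 ≤ s) (hαs : Module.finrank ℝ E + 2 ≤ 2 * α * s ^ 2) :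
    IsBarrier (fun x => Real.exp (-α * ‖x - x₁‖ ^ 2) - Real.exp (-α * R ^ 2)) (ball x₀ ρ)
      (closedBall x₁ s) (2 * Module.finrank ℝ E * α) (4 * α * Real.exp (-α * R ^ 2)) where
  contDiff := (contDiff_const.mul (contDiff_norm_sub_sq x₁)).exp.sub contDiff_const
  le_one x := by
    have : Real.exp (-α * ‖x - x₁‖ ^ 2) ≤ 1 :=
      Real.exp_le_one_iff.2 (mul_nonpos_of_nonpos_of_nonneg (by linarith) (by positivity))
    linarith [Real.exp_pos (-α * R ^ 2)]
  nonpos x hx := by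
    have hRx : R ≤ ‖x - x₁‖ := by
      rw [← dist_eq_norm]
      linarith [not_lt.1 (mem_ball.not.1 hx), dist_triangle x x₁ x₀]
    rw [sub_nonpos, Real.exp_le_exp, neg_mul, neg_mul, neg_le_neg_iff]
    gcongr
  neg_le_laplacian x := by
    have hle : Real.exp (-α * ‖x - x₁‖ ^ 2) ≤ 1 :=
      Real.exp_le_one_iff.2 (mul_nonpos_of_nonpos_of_nonneg (by linarith) (by positivity))
    have hmul := mul_le_mul_of_nonneg_left hle
      (show 0 ≤ 2 * Module.finrank ℝ E * α by positivity)
    have hpos : 0 ≤ 4 * α ^ 2 * ‖x - x₁‖ ^ 2 * Real.exp (-α * ‖x - x₁‖ ^ 2) := by positivity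
    rw [laplacian_exp_neg_mul_norm_sub_sq_sub, sub_mul]
    linarith
  le_laplacian x hx hgx := by
    have hsx : s ^ 2 ≤ ‖x - x₁‖ ^ 2 := by
      rw [mem_closedBall, not_le, dist_eq_norm] at hx
      gcongr
    rw [laplacian_exp_neg_mul_norm_sub_sq_sub]
    refine mul_le_mul ?_ (sub_nonneg.1 hgx) (Real.exp_nonneg _) ?_ <;>
    nlinarith [mul_le_mul_of_nonneg_left hαs hα, mul_le_mul_of_nonneg_left hsx (sq_nonneg α)]

theorem exists_isBarrier_closedBall {x₀ x₁ : E} {ρ s : ℝ} (hx₁ : dist x₁ x₀ < ρ / 2) (hs : 0 < s) :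
    ∃ g : E → ℝ, ∃ A ≥ 0, ∃ η > 0, 0 < g x₀ ∧ IsBarrier g (ball x₀ ρ) (closedBall x₁ s) A η := by
  set α : ℝ := (Module.finrank ℝ E + 2) / (2 * s ^ 2)
  have hα : 0 < α := by positivity
  refine ⟨_, _, by positivity, _, by positivity, ?_, isBarrier_exp_neg_mul_norm_sub_sq hα.le
    (dist_nonneg.trans hx₁.le) (by linarith) hs.le (by simp only [α]; field_simp; rfl)⟩
  rw [sub_pos, Real.exp_lt_exp, neg_mul, neg_mul, neg_lt_neg_iff, ← dist_eq_norm, dist_comm]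
  gcongr

/-- A logarithmic pole at `z₀` regularised at scale `δ`; subtracting `|z - z₀|²` keeps it negative
on the whole plane. -/
noncomputable def logPole (z₀ : ℂ) (δ : ℝ) (z : ℂ) : ℝ :=
  Real.log (‖z - z₀‖ ^ 2 + δ ^ 2) / 2 - ‖z - z₀‖ ^ 2

section LogPole

variable {z₀ z : ℂ} {δ : ℝ}

theorem contDiff_logPole (hδ : 0 < δ) : ContDiff ℝ 2 (logPole z₀ δ) :=
  ((((contDiff_norm_sub_sq z₀).add contDiff_const).log fun z => by positivity).div_const 2).sub
    (contDiff_norm_sub_sq z₀)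

theorem laplacian_logPole (hδ : 0 < δ) :
    Δ (logPole z₀ δ) z = 2 * δ ^ 2 / (‖z - z₀‖ ^ 2 + δ ^ 2) ^ 2 - 4 := by
  have hlog {t : ℝ} (ht : t + δ ^ 2 ≠ 0) :
      HasDerivAt (fun t => Real.log (t + δ ^ 2) / 2 - t) ((t + δ ^ 2)⁻¹ / 2 - 1) t := by
    simpa using ((((hasDerivAt_id t).add_const _).log ht).div_const 2).fun_sub (hasDerivAt_id t)
  have hinv {t : ℝ} (ht : t + δ ^ 2 ≠ 0) :
      HasDerivAt (fun t => (t + δ ^ 2)⁻¹ / 2 - 1) (-1 / (t + δ ^ 2) ^ 2 / 2) t := by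
    simpa using ((((hasDerivAt_id t).add_const (δ ^ 2)).inv ht).div_const 2).sub_const 1
  have hne : ‖z - z₀‖ ^ 2 + δ ^ 2 ≠ 0 := by positivity
  have hnear : ∀ᶠ t in 𝓝 (‖z - z₀‖ ^ 2), t + δ ^ 2 ≠ 0 :=
    ContinuousAt.eventually_ne (by fun_prop) hne
  refine (laplacian_comp_norm_sub_sq (hnear.mono fun t ht => hlog ht) (hinv hne)).trans ?_
  rw [Complex.finrank_real_complex]
  field_simp
  ring

theorem logPole_nonpos (hδ : 0 < δ) (hδ1 : δ ≤ 1) : logPole z₀ δ z ≤ 0 := by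
  have hlog := Real.log_le_sub_one_of_pos (show 0 < ‖z - z₀‖ ^ 2 + δ ^ 2 by positivity)
  rw [logPole]
  nlinarith [sq_nonneg ‖z - z₀‖]

theorem log_sub_one_le_logPole (hδ : 0 < δ) (hz : ‖z - z₀‖ ≤ 1) :
    Real.log δ - 1 ≤ logPole z₀ δ z := by
  have hlog : Real.log (δ ^ 2) ≤ Real.log (‖z - z₀‖ ^ 2 + δ ^ 2) :=
    Real.log_le_log (by positivity) (le_add_of_nonneg_left (by positivity))
  have hsq : ‖z - z₀‖ ^ 2 ≤ 1 := pow_le_one₀ (norm_nonneg _) hz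
  rw [Real.log_pow] at hlog
  push_cast at hlog
  rw [logPole]
  linarith

theorem inv_two_mul_sq_sub_four_le_laplacian_logPole (hδ : 0 < δ) (hz : ‖z - z₀‖ ≤ δ) :
    (2 * δ ^ 2)⁻¹ - 4 ≤ Δ (logPole z₀ δ) z := by
  have hsq : ‖z - z₀‖ ^ 2 ≤ δ ^ 2 := by gcongr
  rw [laplacian_logPole hδ]
  gcongr
  rw [← one_div, div_le_div_iff₀ (by positivity) (by positivity)]
  nlinarith [sq_nonneg ‖z - z₀‖]

theorem laplacian_add_smul_logPole {g : ℂ → ℝ} {a : ℝ} (hg : ContDiff ℝ 2 g) (hδ : 0 < δ) :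
    Δ (g + a • logPole z₀ δ) z = Δ g z + a * Δ (logPole z₀ δ) z := by
  have hp := (contDiff_logPole (z₀ := z₀) hδ).contDiffAt (x := z)
  have hap : ContDiffAt ℝ 2 (a • logPole z₀ δ) z := hp.const_smul a
  rw [hg.contDiffAt.laplacian_add hap, laplacian_smul a hp, smul_eq_mul]

theorem IsBarrier.add_smul_logPole {g : ℂ → ℝ} {U D : Set ℂ} {A η a : ℝ}
    (hg : IsBarrier g U D A η) (hδ : 0 < δ) (hδ1 : δ ≤ 1) (ha : 0 ≤ a) (ha1 : a ≤ 1)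
    (haη : 4 * a ≤ η) : IsBarrier (g + a • logPole z₀ δ) U D (A + 4) 0 := by
  have hle (z : ℂ) : (g + a • logPole z₀ δ) z ≤ g z :=
    add_le_of_nonpos_right (mul_nonpos_of_nonneg_of_nonpos ha (logPole_nonpos hδ hδ1))
  have hΔ (z : ℂ) : Δ g z - 4 * a ≤ Δ (g + a • logPole z₀ δ) z := by
    have : 0 ≤ a * (2 * δ ^ 2 / (‖z - z₀‖ ^ 2 + δ ^ 2) ^ 2) := by positivity
    rw [laplacian_add_smul_logPole hg.contDiff hδ, laplacian_logPole hδ]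
    linarith
  exact {
    contDiff := hg.contDiff.add (contDiff_const.smul (contDiff_logPole hδ))
    le_one := fun z => (hle z).trans (hg.le_one z)
    nonpos := fun z hz => (hle z).trans (hg.nonpos z hz)
    neg_le_laplacian := fun z => by linarith [hΔ z, hg.neg_le_laplacian z]
    le_laplacian := fun z hz hgz => by linarith [hΔ z, hg.le_laplacian z hz (hgz.trans (hle z))] }

theorem IsBarrier.mul_le_laplacian_max_zero_pow_three {g : ℂ → ℝ} {U D : Set ℂ} {A η a κ : ℝ}
    (hg : IsBarrier g U D A η) (hδ : 0 < δ) (hδ1 : δ ≤ 1) (ha : 0 ≤ a) (haη : 4 * a ≤ η)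
    (hκ : 0 ≤ κ) (hzD : z ∉ D) (hzδ : ‖z - z₀‖ ≤ δ) (hgz : κ ≤ g z + a * (Real.log δ - 1)) :
    3 * κ ^ 2 * (a * (2 * δ ^ 2)⁻¹) ≤ Δ (fun w => max ((g + a • logPole z₀ δ) w) 0 ^ 3) z := by
  have hp := contDiff_logPole (z₀ := z₀) hδ
  have hκg : κ ≤ (g + a • logPole z₀ δ) z :=
    hgz.trans (add_le_add_right
      (mul_le_mul_of_nonneg_left (log_sub_one_le_logPole hδ (hzδ.trans hδ1)) ha) _)
  have hgz₀ : 0 ≤ g z :=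
    (hκ.trans hκg).trans (add_le_of_nonpos_right
      (mul_nonpos_of_nonneg_of_nonpos ha (logPole_nonpos hδ hδ1)))
  have hΔ : a * (2 * δ ^ 2)⁻¹ ≤ Δ (g + a • logPole z₀ δ) z := by
    rw [laplacian_add_smul_logPole hg.contDiff hδ]
    linarith [hg.le_laplacian z hzD hgz₀,
      mul_le_mul_of_nonneg_left (inv_two_mul_sq_sub_four_le_laplacian_logPole hδ hzδ) ha]
  calc 3 * κ ^ 2 * (a * (2 * δ ^ 2)⁻¹)
      ≤ 3 * max ((g + a • logPole z₀ δ) z) 0 ^ 2 * Δ (g + a • logPole z₀ δ) z := by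
        gcongr
        exact hκg.trans (le_max_left _ _)
    _ ≤ _ := three_mul_sq_mul_laplacian_le
        (hg.contDiff.add (contDiff_const.smul hp)).contDiffAt

end LogPole

theorem IsBarrier.eventually_exists_isTestFunction {g : ℂ → ℝ} {U D : Set ℂ} {A η : ℝ} {z₀ : ℂ}
    (hg : IsBarrier g U D A η) (hA : 0 ≤ A) (hη : 0 < η) (hgz₀ : 0 < g z₀) (hD : Dᶜ ∈ 𝓝 z₀) :
    ∃ q > 0, ∀ᶠ δ in 𝓝[>] (0 : ℝ), ∃ ψ, IsTestFunction ψ U D (3 * (A + 4)) ∧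
      ∀ z ∈ ball z₀ δ, q / (δ ^ 2 * -Real.log δ) ≤ Δ ψ z := by
  obtain ⟨κ, hκ, hκg⟩ : ∃ κ > 0, 3 * κ < g z₀ := ⟨g z₀ / 4, by positivity, by linarith⟩
  have hnear : ∀ᶠ z in 𝓝 z₀, 3 * κ < g z ∧ z ∉ D :=
    (hg.contDiff.continuous.continuousAt.eventually_const_lt hκg).and hD
  obtain ⟨r, hr, hball⟩ := eventually_nhds_iff_ball.1 hnear
  refine ⟨3 / 2 * κ ^ 3, by positivity, ?_⟩
  filter_upwards [Ioo_mem_nhdsGT (lt_min one_pos hr),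
    Real.tendsto_log_nhdsGT_zero.eventually_le_atBot (-(1 + κ + 4 * κ / η))] with δ hδ hlog
  obtain ⟨hδ1, hδr⟩ := lt_min_iff.1 hδ.2
  have hδ0 := hδ.1
  have hq : 0 < 4 * κ / η := by positivity
  have hL : 0 < -Real.log δ := by linarith
  set a := κ / -Real.log δ
  have ha : 0 < a := by positivity
  have haη : 4 * a ≤ η := by
    rw [← mul_div_assoc, div_le_iff₀ hL, ← div_le_iff₀' hη]
    linarith
  have haL : a * -Real.log δ = κ := div_mul_cancel₀ κ hL.ne'
  have haκ : a ≤ κ := div_le_self hκ.le (by linarith)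
  have ha1 : a ≤ 1 := (div_le_one hL).2 (by linarith)
  have hψ := (hg.add_smul_logPole (z₀ := z₀) hδ0 hδ1.le ha.le ha1 haη)
    |>.isTestFunction_max_zero_pow_three (by positivity)
  refine ⟨_, hψ, fun z hz => ?_⟩
  obtain ⟨hgz, hzD⟩ := hball z (ball_subset_ball hδr.le hz)
  convert hg.mul_le_laplacian_max_zero_pow_three hδ0 hδ1.le ha.le haη hκ.le hzD
    (mem_ball_iff_norm.1 hz).le (by linarith) using 1
  simp only [a]
  field_simp

end TestFunction

section UniqueContinuation

theorem integral_mul_le_of_nonpos_of_neg_le {α : Type*} [MeasurableSpace α] {μ : Measure α}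
    {F h : α → ℝ} {B D : Set α} {A C Q : ℝ} (hB : MeasurableSet B) (hD : MeasurableSet D)
    (hBD : Disjoint B D) (hμD : μ D ≠ ⊤) (hF : ∀ x, F x ≤ 0) (hFD : ∀ x ∈ D, -C ≤ F x) (hA : 0 ≤ A)
    (hhD : ∀ x, -A ≤ h x) (hh : ∀ x ∉ D, 0 ≤ h x) (hhB : ∀ x ∈ B, Q ≤ h x)
    (hFh : Integrable (fun x => F x * h x) μ) (hFB : IntegrableOn F B μ) :
    ∫ x, F x * h x ∂μ ≤ A * C * μ.real D + Q * ∫ x in B, F x ∂μ := by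
  have hpt (x : α) : F x * h x ≤
      D.indicator (fun _ => A * C) x + B.indicator (fun x => Q * F x) x := by
    by_cases hxD : x ∈ D
    · have hxB := hBD.notMem_of_mem_right hxD
      rw [Set.indicator_of_mem hxD, Set.indicator_of_notMem hxB, add_zero]
      linarith [mul_le_mul_of_nonpos_left (hhD x) (hF x),
        mul_le_mul_of_nonneg_left (hFD x hxD) hA]
    rw [Set.indicator_of_notMem hxD, zero_add]
    by_cases hxB : x ∈ B
    · rw [Set.indicator_of_mem hxB, mul_comm]
      exact mul_le_mul_of_nonpos_right (hhB x hxB) (hF x)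
    · rw [Set.indicator_of_notMem hxB]
      exact mul_nonpos_of_nonpos_of_nonneg (hF x) (hh x hxD)
  have hconst : Integrable (D.indicator fun _ => A * C) μ :=
    (integrable_indicator_iff hD).2 (integrableOn_const hμD)
  have hQF : Integrable (B.indicator fun x => Q * F x) μ :=
    (integrable_indicator_iff hB).2 (hFB.const_mul Q)
  calc ∫ x, F x * h x ∂μ
      ≤ ∫ x, (D.indicator (fun _ => A * C) x + B.indicator (fun x => Q * F x) x) ∂μ :=
        integral_mono hFh (hconst.add hQF) hpt
    _ = A * C * μ.real D + Q * ∫ x in B, F x ∂μ := by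
        rw [integral_add hconst hQF, integral_indicator hD, integral_indicator hB,
          setIntegral_const, integral_const_mul, smul_eq_mul, mul_comm]

theorem log_add_le_log_add_div {t ε : ℝ} (ht : 0 ≤ t) (hε : 0 < ε) :
    Real.log (t + ε) ≤ Real.log ε + t / ε := by
  have h := Real.log_le_sub_one_of_pos (show 0 < (t + ε) / ε by positivity)
  rw [Real.log_div (by positivity) hε.ne', add_div, div_self hε.ne'] at h
  linarith

variable {f g : ℂ → ℂ} {z₀ : ℂ}

theorem VanishesInfiniteOrder.eventually_setIntegral_norm_sq_le (hinf : VanishesInfiniteOrder f z₀)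
    (m : ℕ) : ∀ᶠ δ in 𝓝[>] 0, ∫ z in ball z₀ δ, ‖f z‖ ^ 2 ≤ δ ^ m := by
  filter_upwards [(hinf m m.cast_nonneg).eventually_le_const one_pos, self_mem_nhdsWithin]
    with δ hle (hδ : 0 < δ)
  rwa [Real.rpow_neg hδ.le, Real.rpow_natCast, inv_mul_le_iff₀ (by positivity), mul_one] at hle

theorem VanishesInfiniteOrder.eventually_setIntegral_log_le (hinf : VanishesInfiniteOrder f z₀)
    (hf : Continuous f) (m : ℕ) : ∀ᶠ δ in 𝓝[>] 0,
      ∫ z in ball z₀ δ, Real.log (‖f z‖ ^ 2 + δ ^ (2 * m)) / 2 ≤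
        δ ^ 2 * (Real.pi * m * Real.log δ + 1 / 2) := by
  filter_upwards [hinf.eventually_setIntegral_norm_sq_le (2 * m + 2), self_mem_nhdsWithin]
    with δ hle (hδ : 0 < δ)
  set ε := δ ^ (2 * m)
  have hε : 0 < ε := by positivity
  have hball {h : ℂ → ℝ} (hh : Continuous h) : IntegrableOn h (ball z₀ δ) :=
    (hh.continuousOn.integrableOn_compact (isCompact_closedBall z₀ δ)).mono_set
      ball_subset_closedBall
  have hlog : Continuous fun z => Real.log (‖f z‖ ^ 2 + ε) / 2 :=
    (Continuous.log (by fun_prop) fun z => (norm_sq_add_pos hε (f z)).ne').div_const 2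
  have hvol : volume.real (ball z₀ δ) = Real.pi * δ ^ 2 := by
    simp [Measure.real, Complex.volume_ball, hδ.le, mul_comm]
  calc ∫ z in ball z₀ δ, Real.log (‖f z‖ ^ 2 + ε) / 2
      ≤ ∫ z in ball z₀ δ, (Real.log ε / 2 + (2 * ε)⁻¹ * ‖f z‖ ^ 2) := by
        refine integral_mono (hball hlog) (hball (by fun_prop)) fun z => ?_
        have := log_add_le_log_add_div (sq_nonneg ‖f z‖) hε
        calc Real.log (‖f z‖ ^ 2 + ε) / 2 ≤ (Real.log ε + ‖f z‖ ^ 2 / ε) / 2 := by gcongr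
          _ = Real.log ε / 2 + (2 * ε)⁻¹ * ‖f z‖ ^ 2 := by field_simp
    _ = Real.pi * δ ^ 2 * (m * Real.log δ) + (2 * ε)⁻¹ * ∫ z in ball z₀ δ, ‖f z‖ ^ 2 := by
        rw [integral_add (hball continuous_const) (hball (by fun_prop)), setIntegral_const,
          integral_const_mul, hvol, smul_eq_mul, Real.log_pow]
        push_cast
        ring
    _ ≤ Real.pi * δ ^ 2 * (m * Real.log δ) + (2 * ε)⁻¹ * (ε * δ ^ 2) := by
        gcongr
        rwa [← pow_add]
    _ = δ ^ 2 * (Real.pi * m * Real.log δ + 1 / 2) := by field_simp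

theorem IsTestFunction.neg_three_mul_setIntegral_le {ψ : ℂ → ℝ} {U B D : Set ℂ}
    {A M Q b ε : ℝ} (hψ : IsTestFunction ψ U D A) (hA : 0 ≤ A) (hU : MeasurableSet U)
    (hUb : Bornology.IsBounded U) (hB : MeasurableSet B) (hBb : Bornology.IsBounded B)
    (hD : IsCompact D) (hBD : Disjoint B D) (hf : ContDiff ℝ 2 f) (hε : 0 < ε)
    (hfM : ∀ z, ‖f z‖ ^ 2 + ε ≤ Real.exp (2 * M)) (hM : 0 ≤ M) (hb : 0 < b)
    (hfb : ∀ z ∈ D, b ≤ ‖f z‖) (hQ : 0 ≤ Q) (hψQ : ∀ z ∈ B, Q ≤ Δ ψ z)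
    (hV : IntegrableOn (fun z => ‖wirtingerDBar f z‖ ^ 2 / ‖f z‖ ^ 2) U) :
    -3 * ∫ z in U, ‖wirtingerDBar f z‖ ^ 2 / ‖f z‖ ^ 2 ≤
      A * (M + 1 - Real.log b) * volume.real D +
        Q * ∫ z in B, Real.log (‖f z‖ ^ 2 + ε) / 2 := by
  set L : ℂ → ℝ := fun z => Real.log (‖f z‖ ^ 2 + ε) / 2
  have hL : Continuous L := (contDiff_log_norm_sq_add hf hε).continuous
  have hLM (z : ℂ) : L z ≤ M := by
    have := (Real.log_le_iff_le_exp (norm_sq_add_pos hε (f z))).2 (hfM z)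
    exact (div_le_iff₀' two_pos).2 this
  have hLb (z : ℂ) (hz : z ∈ D) : Real.log b ≤ L z := by
    rw [le_div_iff₀' two_pos, ← Nat.cast_two, ← Real.log_pow]
    have := hfb z hz
    exact Real.log_le_log (by positivity) (le_add_of_le_of_nonneg (by gcongr) hε.le)
  have hc : HasCompactSupport ψ := .intro hUb.isCompact_closure fun z hz =>
    hψ.eq_zero z fun h => hz (subset_closure h)
  have hψΔ := continuous_laplacian hψ.contDiff
  have hint {h : ℂ → ℝ} (hh : Continuous h) : Integrable fun z => h z * Δ ψ z :=
    (hh.mul hψΔ).integrable_of_hasCompactSupport (hasCompactSupport_laplacian hc).mul_left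
  have hLψ : Continuous fun z => L z - ψ z := hL.sub hψ.contDiff.continuous
  have hball {h : ℂ → ℝ} (hh : Continuous h) : IntegrableOn h B :=
    (hh.continuousOn.integrableOn_compact hBb.isCompact_closure).mono_set subset_closure
  calc -3 * ∫ z in U, ‖wirtingerDBar f z‖ ^ 2 / ‖f z‖ ^ 2
      ≤ ∫ z, (L z - ψ z) * Δ ψ z :=
        neg_three_mul_setIntegral_le_integral_mul_laplacian hf hψ.contDiff hc hε hψ.mem_Icc hU
          hψ.eq_zero hV
    _ = ∫ z, (L z - ψ z - M) * Δ ψ z := by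
        simp_rw [sub_mul _ M]
        rw [integral_sub (hint hLψ) (hint continuous_const), integral_const_mul,
          integral_laplacian_eq_zero volume hψ.contDiff hc, mul_zero, sub_zero]
    _ ≤ A * (M + 1 - Real.log b) * volume.real D + Q * ∫ z in B, (L z - ψ z - M) := by
        refine integral_mul_le_of_nonpos_of_neg_le hB hD.measurableSet hBD
          hD.measure_lt_top.ne (fun z => ?_) (fun z hz => ?_) hA hψ.neg_le_laplacian
          hψ.laplacian_nonneg hψQ (hint (hLψ.sub continuous_const))
          (hball (hLψ.sub continuous_const))
        · linarith [hLM z, (hψ.mem_Icc z).1]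
        · linarith [hLb z hz, (hψ.mem_Icc z).2]
    _ ≤ A * (M + 1 - Real.log b) * volume.real D + Q * ∫ z in B, L z := by
        refine add_le_add_right (mul_le_mul_of_nonneg_left (integral_mono
          (hball (hLψ.sub continuous_const)) (hball hL) fun z => ?_) hQ) _
        simp only [Pi.sub_apply]
        linarith [(hψ.mem_Icc z).1]

theorem VanishesInfiniteOrder.eventually_div_mul_setIntegral_log_le
    (hinf : VanishesInfiniteOrder f z₀) (hf : Continuous f) (m : ℕ) {q : ℝ} (hq : 0 ≤ q) :
    ∀ᶠ δ in 𝓝[>] 0, q / (δ ^ 2 * -Real.log δ) *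
      ∫ z in ball z₀ δ, Real.log (‖f z‖ ^ 2 + δ ^ (2 * m)) / 2 ≤ q * (1 / 2 - Real.pi * m) := by
  filter_upwards [hinf.eventually_setIntegral_log_le hf m, self_mem_nhdsWithin,
    Real.tendsto_log_nhdsGT_zero.eventually_le_atBot (-1)] with δ hle (hδ : 0 < δ) hlog
  have hL : 1 ≤ -Real.log δ := by linarith
  have hL₀ : 0 < -Real.log δ := by linarith
  calc q / (δ ^ 2 * -Real.log δ) * ∫ z in ball z₀ δ, Real.log (‖f z‖ ^ 2 + δ ^ (2 * m)) / 2
      ≤ q / (δ ^ 2 * -Real.log δ) * (δ ^ 2 * (Real.pi * m * Real.log δ + 1 / 2)) := by gcongr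
    _ = q * (1 / 2 / -Real.log δ - Real.pi * m) := by
        have hlog₀ : Real.log δ ≠ 0 := (neg_pos.1 hL₀).ne
        field_simp
        ring
    _ ≤ q * (1 / 2 - Real.pi * m) := by
        exact mul_le_mul_of_nonneg_left
          (sub_le_sub_right (div_le_self one_half_pos.le hL) _) hq

theorem VanishesInfiniteOrder.not_integrableOn_of_isBarrier {g : ℂ → ℝ} {U D : Set ℂ}
    {A η b K : ℝ} (hinf : VanishesInfiniteOrder f z₀) (hf : ContDiff ℝ 2 f)
    (hfK : ∀ z, ‖f z‖ ≤ K) (hg : IsBarrier g U D A η) (hA : 0 ≤ A) (hη : 0 < η) (hgz₀ : 0 < g z₀)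
    (hU : MeasurableSet U) (hUb : Bornology.IsBounded U) (hD : IsCompact D) (hz₀ : z₀ ∉ D)
    (hb : 0 < b) (hfb : ∀ z ∈ D, b ≤ ‖f z‖) :
    ¬ IntegrableOn (fun z => ‖wirtingerDBar f z‖ ^ 2 / ‖f z‖ ^ 2) U := fun hV => by
  have hz₀D : Dᶜ ∈ 𝓝 z₀ := hD.isClosed.isOpen_compl.mem_nhds hz₀
  obtain ⟨q, hq, hψ⟩ := hg.eventually_exists_isTestFunction hA hη hgz₀ hz₀D
  set M := Real.log (K ^ 2 + 1) / 2
  set C := 3 * (A + 4) * (M + 1 - Real.log b) * volume.real D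
  set V := ∫ z in U, ‖wirtingerDBar f z‖ ^ 2 / ‖f z‖ ^ 2
  have hM : 0 ≤ M := by
    have := Real.log_nonneg (show 1 ≤ K ^ 2 + 1 from le_add_of_nonneg_left (sq_nonneg K))
    positivity
  have hexpM : Real.exp (2 * M) = K ^ 2 + 1 := by
    rw [mul_div_cancel₀ _ two_ne_zero, Real.exp_log (by positivity)]
  have hbound (m : ℕ) : -3 * V ≤ C + q * (1 / 2 - Real.pi * m) := by
    obtain ⟨δ, hlog, ⟨ψ, hψ, hψQ⟩, hδD, hδ0, hδ1⟩ :=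
      ((hinf.eventually_div_mul_setIntegral_log_le hf.continuous m hq.le).and <| hψ.and <|
        (eventually_ball_subset hz₀D |>.filter_mono nhdsWithin_le_nhds).and
          (Ioo_mem_nhdsGT one_pos)).exists
    have hQ : 0 ≤ q / (δ ^ 2 * -Real.log δ) := div_nonneg hq.le
      (mul_nonneg (sq_nonneg δ) (neg_nonneg.2 (Real.log_nonpos hδ0.le hδ1.le)))
    have hfM (z : ℂ) : ‖f z‖ ^ 2 + δ ^ (2 * m) ≤ Real.exp (2 * M) := by
      rw [hexpM]
      gcongr
      · exact hfK z
      · exact pow_le_one₀ hδ0.le hδ1.le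
    exact (hψ.neg_three_mul_setIntegral_le (by positivity) hU hUb measurableSet_ball
      isBounded_ball hD (Set.disjoint_left.2 fun _ hz => hδD hz) hf (pow_pos hδ0 (2 * m)) hfM hM
      hb hfb hQ hψQ hV).trans (by gcongr)
  obtain ⟨m, hm⟩ := exists_nat_gt (((C + 3 * V) / q + 1 / 2) / Real.pi)
  rw [div_lt_iff₀' Real.pi_pos, ← lt_sub_iff_add_lt, div_lt_iff₀' hq] at hm
  linarith [hbound m]

theorem VanishesInfiniteOrder.eq_zero_of_dist_lt {z₁ : ℂ} {ρ : ℝ}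
    (hinf : VanishesInfiniteOrder f z₀) (hf : ContDiff ℝ 2 f) (hc : HasCompactSupport f)
    (hV : IntegrableOn (fun z => ‖wirtingerDBar f z‖ ^ 2 / ‖f z‖ ^ 2) (ball z₀ ρ))
    (hz₁ : dist z₁ z₀ < ρ / 2) (hne : z₁ ≠ z₀) : f z₁ = 0 := by
  by_contra hfz₁
  have hfz₁ : 0 < ‖f z₁‖ := norm_pos_iff.2 hfz₁
  have hnear : ∀ᶠ z in 𝓝 z₁, ‖f z₁‖ / 2 ≤ ‖f z‖ :=
    hf.continuous.norm.continuousAt.eventually_const_le (half_lt_self hfz₁)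
  obtain ⟨s, hs, hsb⟩ := nhds_basis_closedBall.eventually_iff.1
    (hnear.and (eventually_ne_nhds hne))
  obtain ⟨K, hK⟩ := hf.continuous.bounded_above_of_compact_support hc
  obtain ⟨g, A, hA, η, hη, hgz₀, hg⟩ := exists_isBarrier_closedBall hz₁ hs
  exact hinf.not_integrableOn_of_isBarrier hf hK hg hA hη hgz₀ measurableSet_ball isBounded_ball
    (isCompact_closedBall z₁ s) (fun h => (hsb h).2 rfl) (half_pos hfz₁)
    (fun z hz => (hsb hz).1) hV

theorem exists_contDiff_hasCompactSupport_eventuallyEq {E F : Type*} [NormedAddCommGroup E]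
    [NormedSpace ℝ E] [FiniteDimensional ℝ E] [NormedAddCommGroup F] [NormedSpace ℝ F] {n : ℕ}
    {f : E → F} {x : E} (hf : ContDiffAt ℝ n f x) :
    ∃ g : E → F, ContDiff ℝ n g ∧ HasCompactSupport g ∧ g =ᶠ[𝓝 x] f := by
  obtain ⟨r, hr, hball⟩ := nhds_basis_closedBall.eventually_iff.1 (hf.eventually (by simp))
  let χ : ContDiffBump x := ⟨r / 2, r, half_pos hr, half_lt_self hr⟩
  refine ⟨fun y => χ y • f y, contDiff_iff_contDiffAt.2 fun y => ?_, χ.hasCompactSupport.smul_right,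
    χ.eventuallyEq_one.mono fun y hy => ?_⟩
  · by_cases hy : y ∈ closedBall x r
    · exact χ.contDiffAt.smul (hball hy)
    · have hsupp : y ∉ tsupport fun y => χ y • f y := fun h =>
        hy (χ.tsupport_eq ▸ tsupport_smul_subset_left χ f h)
      exact contDiffAt_const.congr_of_eventuallyEq (notMem_tsupport_iff_eventuallyEq.1 hsupp)
  · simp [hy]

theorem wirtingerDBar_congr (h : f =ᶠ[𝓝 z₀] g) : wirtingerDBar f z₀ = wirtingerDBar g z₀ := by
  rw [wirtingerDBar, wirtingerDBar, h.fderiv_eq]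

theorem VanishesInfiniteOrder.congr (hinf : VanishesInfiniteOrder f z₀) (h : f =ᶠ[𝓝 z₀] g) :
    VanishesInfiniteOrder g z₀ := fun m hm => by
  refine (hinf m hm).congr' ?_
  filter_upwards [(eventually_ball_subset h).filter_mono nhdsWithin_le_nhds] with r hr
  rw [setIntegral_congr_fun measurableSet_ball fun z hz => by rw [hr hz]]

theorem VanishesInfiniteOrder.eventuallyEq_zero (hinf : VanishesInfiniteOrder f z₀)
    (hf : ContDiffAt ℝ 2 f z₀)
    (hV : IntegrableAtFilter (fun z => ‖wirtingerDBar f z‖ ^ 2 / ‖f z‖ ^ 2) (𝓝 z₀)) :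
    f =ᶠ[𝓝 z₀] 0 := by
  obtain ⟨g, hg, hc, hgf⟩ := exists_contDiff_hasCompactSupport_eventuallyEq hf
  obtain ⟨s, hs, hVs⟩ := hV
  obtain ⟨ρ, hρ, hball⟩ := eventually_nhds_iff_ball.1 (hgf.eventuallyEq_nhds.and hs)
  have hVg : IntegrableOn (fun z => ‖wirtingerDBar g z‖ ^ 2 / ‖g z‖ ^ 2) (ball z₀ ρ) :=
    (hVs.mono_set fun z hz => (hball z hz).2).congr_fun
      (fun z hz => by rw [wirtingerDBar_congr (hball z hz).1, (hball z hz).1.eq_of_nhds])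
      measurableSet_ball
  have hg₀ : g =ᶠ[𝓝[≠] z₀] 0 := by
    filter_upwards [nhdsWithin_le_nhds (ball_mem_nhds z₀ (half_pos hρ)), self_mem_nhdsWithin]
      with z hz hne
    exact (hinf.congr hgf.symm).eq_zero_of_dist_lt hg hc hVg hz hne
  exact hgf.symm.trans <|
    (hg.continuous.continuousAt.eventuallyEq_nhds_iff_eventuallyEq_nhdsNE continuousAt_const).1 hg₀

theorem VanishesInfiniteOrder.lintegral_eq_top {r : ℝ} (hinf : VanishesInfiniteOrder f z₀)
    (hf : ContDiffAt ℝ 2 f z₀) (hne : ¬ f =ᶠ[𝓝 z₀] 0) (hr : 0 < r) :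
    ∫⁻ z in ball z₀ r, ENNReal.ofReal (‖wirtingerDBar f z‖ ^ 2 / ‖f z‖ ^ 2) = ⊤ := by
  by_contra hfin
  obtain ⟨ρ, hρ, hball⟩ := eventually_nhds_iff_ball.1 (hf.eventually (by simp))
  set δ := min r ρ
  have hfc : ContinuousOn f (ball z₀ δ) := fun z hz =>
    (hball z (ball_subset_ball (min_le_right _ _) hz)).continuousAt.continuousWithinAt
  have hmeas : AEStronglyMeasurable (fun z => ‖wirtingerDBar f z‖ ^ 2 / ‖f z‖ ^ 2)
      (volume.restrict (ball z₀ δ)) := by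
    have hfm := hfc.aemeasurable measurableSet_ball (μ := volume)
    have hd : Measurable (wirtingerDBar f) :=
      ((measurable_fderiv_apply_const ℝ f 1).add
        ((measurable_fderiv_apply_const ℝ f Complex.I).const_mul Complex.I)).div_const 2
    exact ((hd.norm.pow_const 2).aemeasurable.div (hfm.norm.pow_const 2)).aestronglyMeasurable
  refine hne (hinf.eventuallyEq_zero hf ⟨ball z₀ δ, ball_mem_nhds z₀ (lt_min hr hρ), ?_⟩)
  rw [IntegrableOn, ← lintegral_ofReal_ne_top_iff_integrable hmeas
    (.of_forall fun z => by positivity)]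
  exact ne_top_of_le_ne_top hfin (lintegral_mono_set (ball_subset_ball (min_le_left _ _)))

end UniqueContinuation

theorem eqOn_zero_of_eventuallyEq_zero_nhdsWithin {E : Type*} [NormedAddCommGroup E]
    [NormedSpace ℂ E] [CompleteSpace E] {Ω : Set ℂ} {u : ℂ → E} {z₀ : ℂ} (hΩ : IsOpen Ω)
    (hconn : IsPreconnected Ω) (hz₀ : z₀ ∈ closure Ω) (hu : DifferentiableOn ℂ u Ω)
    (h : u =ᶠ[𝓝[Ω] z₀] 0) : Set.EqOn u 0 Ω := by
  have := mem_closure_iff_nhdsWithin_neBot.1 hz₀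
  obtain ⟨z, hz, hzΩ⟩ := ((eventually_eventually_nhdsWithin.2 h).and self_mem_nhdsWithin).exists
  rw [hΩ.nhdsWithin_eq hzΩ] at hz
  exact (hu.analyticOnNhd hΩ).eqOn_zero_of_preconnected_of_eventuallyEq_zero hconn hzΩ hz

theorem infinite_order_dbar_divergence_general {Ω : Set ℂ} (hΩ : IsOpen Ω)
    (hconn : IsPreconnected Ω) {z₀ : ℂ} (hz₀ : z₀ ∈ closure Ω) {u : ℂ → ℂ}
    (hu : DifferentiableOn ℂ u Ω) (hne : ¬ Set.EqOn u 0 Ω) {f : ℂ → ℂ}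
    (hf : ContDiffAt ℝ 2 f z₀) (hfu : f =ᶠ[𝓝[Ω] z₀] u) (hinf : VanishesInfiniteOrder f z₀)
    {r : ℝ} (hr : 0 < r) :
    ∫⁻ z in ball z₀ r, ENNReal.ofReal (‖wirtingerDBar f z‖ ^ 2 / ‖f z‖ ^ 2) = ⊤ :=
  hinf.lintegral_eq_top hf (fun h => hne <|
    eqOn_zero_of_eventuallyEq_zero_nhdsWithin hΩ hconn hz₀ hu <|
      hfu.symm.trans (h.filter_mono nhdsWithin_le_nhds)) hr

/-- Proposition 5.2(2): a smooth extension `ũ` across a boundary point `z₀` of a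
nonconstant holomorphic function, with `ũ(z₀) = 0` vanishing to infinite order,
satisfies `∫_B |∂̄ũ|²/|ũ|² = ∞` on every ball `B = B(z₀,r) ⊆ W`. -/
theorem infinite_order_dbar_divergence
    (Ω : Set ℂ) (hΩopen : IsOpen Ω) (hΩconn : IsConnected Ω)
    (z₀ : ℂ) (hz₀ : z₀ ∈ frontier Ω)
    (u : ℂ → ℂ) (hu : DifferentiableOn ℂ u Ω)
    (hnonconst : ¬ ∃ c : ℂ, Set.EqOn u (fun _ => c) Ω)
    (W : Set ℂ) (hWopen : IsOpen W) (hz₀W : z₀ ∈ W)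
    (ut : ℂ → ℂ) (hsmooth : ContDiffOn ℝ (⊤ : ℕ∞) ut W)
    (hagree : Set.EqOn ut u (W ∩ Ω)) (hut0 : ut z₀ = 0)
    (hinf : VanishesInfiniteOrder ut z₀) :
    ∀ r : ℝ, 0 < r → Metric.ball z₀ r ⊆ W →
      ∫⁻ z in Metric.ball z₀ r,
        ENNReal.ofReal (‖wirtingerDBar ut z‖ ^ 2 / ‖ut z‖ ^ 2) = ⊤ := by
  intro r hr _
  have hW : W ∈ 𝓝 z₀ := hWopen.mem_nhds hz₀W
  exact infinite_order_dbar_divergence_general hΩopen hΩconn.isPreconnected hz₀.1 hu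
    (fun h => hnonconst ⟨0, h⟩) ((hsmooth.contDiffAt hW).of_le (WithTop.coe_le_coe.2 le_top))
    (hagree.eventuallyEq_of_mem (inter_mem (mem_nhdsWithin_of_mem_nhds hW) self_mem_nhdsWithin))
    hinf hr
end
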